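/- arXiv:0809.1643 — 5 statements merged into one kernel-verified Lean document; each statement's English description precedes it below -/
import Mathlib

section
/- Let p < q be reals, let 1 ≤ r ≤ n be integers, let f be (n+1)-times continuously differentiable on [p,q], and let x, x_0, …, x_n be pairwise distinct points of [p,q]. Then there exists ξ in the smallest closed interval containing x, x_0, …, x_n such that f[x, x_0, …, x_{r−1}] = D_{r,r+1,…,n}[x] + (f^{(n+1)}(ξ)/(n+1)!)·∏_{i=r}^{n}(x − x_i). -/
/-- Divided difference `f[y i, y (i+1), …, y j]` defined by the standard recursion
`f[y_i,…,y_j] = (f[y_{i+1},…,y_j] − f[y_i,…,y_{j−1}])/(y_j − y_i)`. -/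
noncomputable def divDiff (f : ℝ → ℝ) (y : ℕ → ℝ) (i j : ℕ) : ℝ :=
  if _h : j ≤ i then f (y i)
  else (divDiff f y (i + 1) j - divDiff f y i (j - 1)) / (y j - y i)
termination_by j - i
decreasing_by all_goals omega

/-- Neville iteration: `neville xs x g i j` is the iterate built from the initial
values `g j` (at node `xs j`) over the nodes `xs j, …, xs (j+i)`. -/
noncomputable def neville (xs : ℕ → ℝ) (x : ℝ) (g : ℕ → ℝ) : ℕ → ℕ → ℝ
  | 0, j => g j
  | i + 1, j =>
      ((xs (i + 1 + j) - x) * neville xs x g i j - (xs j - x) * neville xs x g i (j + 1)) /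
        (xs (i + 1 + j) - xs j)

/-- Aitken iteration with base index `r`: `aitken xs x g r i j` is the iterate
`d_{r,r+1,…,i,j}` (for `r ≤ i < j`) built from the initial values `g j` at the nodes `xs j`. -/
noncomputable def aitken (xs : ℕ → ℝ) (x : ℝ) (g : ℕ → ℝ) (r : ℕ) (i j : ℕ) : ℝ :=
  if _h : i ≤ r then ((xs j - x) * g r - (xs r - x) * g j) / (xs j - xs r)
  else ((xs j - x) * aitken xs x g r (i - 1) i - (xs i - x) * aitken xs x g r (i - 1) j) /
        (xs j - xs i)
termination_by i
decreasing_by all_goals omega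

/-- The full Aitken iterate `d_{r,r+1,…,n}` (equal to the initial value when `n = r`). -/
noncomputable def aitkenLast (xs : ℕ → ℝ) (x : ℝ) (g : ℕ → ℝ) (r n : ℕ) : ℝ :=
  if n ≤ r then g n else aitken xs x g r (n - 1) n

/-- Confluent divided difference `g[x,…,x (m times), xi]`, defined using
`g[x,…,x (m times)] = g^{(m−1)}(x)/(m−1)!` and `g[xi] = g xi`. -/
noncomputable def confDD (g : ℝ → ℝ) (x xi : ℝ) : ℕ → ℝ
  | 0 => g xi
  | m + 1 => (confDD g x xi m - iteratedDeriv m g x / (Nat.factorial m : ℝ)) / (xi - x)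

open Polynomial Finset

lemma gen_rolle (p q : ℝ) (hpq : p < q) (k : ℕ) : ∀ (F : ℝ → ℝ) (z : ℕ → ℝ),
    ContDiffOn ℝ (k : ℕ) F (Set.Icc p q) → (∀ i ≤ k, z i ∈ Set.Icc p q) →
    (∀ i < k, z i < z (i + 1)) → (∀ i ≤ k, F (z i) = 0) →
    ∃ ξ ∈ Set.Icc (z 0) (z k), iteratedDerivWithin k F (Set.Icc p q) ξ = 0 := by
  induction k with
  | zero =>
    intro F z _ _ _ h0
    exact ⟨z 0, by simp, by simpa using h0 0 le_rfl⟩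
  | succ k ih =>
    intro F z hF hz hlt h0
    have hu := uniqueDiffOn_Icc hpq
    have key : ∀ i, ∃ w, i ≤ k → w ∈ Set.Ioo (z i) (z (i + 1)) ∧
        derivWithin F (Set.Icc p q) w = 0 := by
      intro i
      by_cases hi : i ≤ k
      · have hsub : Set.Icc (z i) (z (i + 1)) ⊆ Set.Icc p q :=
          Set.Icc_subset_Icc (hz i (by omega)).1 (hz (i + 1) (by omega)).2
        obtain ⟨c, hc, hc0⟩ := exists_deriv_eq_zero (hlt i (by omega))
          (hF.continuousOn.mono hsub)
          (by rw [h0 i (by omega), h0 (i + 1) (by omega)])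
        refine ⟨c, fun _ => ⟨hc, ?_⟩⟩
        rw [derivWithin_of_mem_nhds, hc0]
        exact Icc_mem_nhds (lt_of_le_of_lt (hz i (by omega)).1 hc.1)
          (lt_of_lt_of_le hc.2 (hz (i + 1) (by omega)).2)
      · exact ⟨0, fun h => absurd h hi⟩
    choose w hw using key
    obtain ⟨ξ, hξ, hξ0⟩ := ih (derivWithin F (Set.Icc p q)) w
      (hF.derivWithin hu (by norm_cast))
      (fun i hi => ⟨(hz i (by omega)).1.trans (hw i hi).1.1.le,
        (hw i hi).1.2.le.trans (hz (i + 1) (by omega)).2⟩)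
      (fun i hi => (hw i (by omega)).1.2.trans (hw (i + 1) (by omega)).1.1)
      (fun i hi => (hw i hi).2)
    refine ⟨ξ, ⟨(hw 0 (by omega)).1.1.le.trans hξ.1, hξ.2.trans (hw k le_rfl).1.2.le⟩, ?_⟩
    rw [iteratedDerivWithin_succ', hξ0]

lemma iteratedDeriv_poly (m : ℕ) : ∀ T : ℝ[X],
    iteratedDeriv m (fun t => T.eval t) = fun t => ((derivative^[m]) T).eval t := by
  induction m with
  | zero => intro T; simp
  | succ m ih =>
    intro T
    rw [iteratedDeriv_succ']
    have : deriv (fun t => T.eval t) = fun t => (derivative T).eval t := by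
      ext t; exact T.deriv
    rw [this, ih]; rfl

lemma iteratedDeriv_top (m : ℕ) (T : ℝ[X]) (hT : T.natDegree ≤ m) (t : ℝ) :
    iteratedDeriv m (fun t => T.eval t) t = (m.factorial : ℝ) * T.coeff m := by
  rw [iteratedDeriv_poly]
  have h : (derivative^[m]) T = C ((derivative^[m] T).coeff 0) := by
    apply eq_C_of_natDegree_eq_zero
    have := natDegree_iterate_derivative T m
    omega
  simp only
  rw [h, eval_C, coeff_iterate_derivative]
  simp [Nat.descFactorial_self]

lemma erase_Icc_right (i j : ℕ) : (Icc i (j + 1)).erase (j + 1) = Icc i j := by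
  ext a; simp only [mem_erase, mem_Icc]; omega

lemma erase_Icc_left (i j : ℕ) : (Icc i j).erase i = Icc (i + 1) j := by
  ext a; simp only [mem_erase, mem_Icc]; omega

lemma divDiff_eq (f : ℝ → ℝ) (y : ℕ → ℝ) (m : ℕ) : ∀ i : ℕ,
    Set.InjOn y (Icc i (i + m) : Finset ℕ) →
    divDiff f y i (i + m) = (Lagrange.interpolate (Icc i (i + m)) y (fun k => f (y k))).coeff m := by
  induction m with
  | zero =>
    intro i _
    rw [divDiff]
    simp
  | succ m ih =>
    intro i hinj
    have hne : y i ≠ y (i + m + 1) := fun h => by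
      have := hinj (by simp) (by simp; omega) h
      omega
    have h1 : Set.InjOn y (Icc i (i + m) : Finset ℕ) := hinj.mono (by
      intro a; simp only [coe_Icc, Set.mem_Icc]; omega)
    have h2 : Set.InjOn y (Icc (i + 1) (i + 1 + m) : Finset ℕ) := hinj.mono (by
      intro a; simp only [coe_Icc, Set.mem_Icc]; omega)
    rw [divDiff, dif_neg (by omega)]
    rw [show i + (m + 1) - 1 = i + m by omega, show i + (m + 1) = i + m + 1 by omega]
    rw [Lagrange.interpolate_eq_add_interpolate_erase (fun k => f (y k)) (s := Icc i (i + m + 1)) hinj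
      (i := i) (j := i + m + 1) (by simp; omega) (by simp; omega) (by omega), erase_Icc_right,
      erase_Icc_left]
    have e1 := ih i h1
    have e2 := ih (i + 1) h2
    rw [show i + 1 + m = i + m + 1 by omega] at e2 h2
    have d1 : (Lagrange.interpolate (Icc i (i + m)) y (fun k => f (y k))).coeff (m + 1) = 0 := by
      apply coeff_eq_zero_of_degree_lt
      refine (Lagrange.degree_interpolate_lt _ h1).trans_le ?_
      simp only [Nat.card_Icc]; norm_cast; omega
    have d2 : (Lagrange.interpolate (Icc (i + 1) (i + m + 1)) y (fun k => f (y k))).coeff (m + 1) = 0 := by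
      apply coeff_eq_zero_of_degree_lt
      refine (Lagrange.degree_interpolate_lt _ h2).trans_le ?_
      simp only [Nat.card_Icc]; norm_cast; omega
    rw [e1, e2]
    generalize Lagrange.interpolate (Icc i (i + m)) y (fun k => f (y k)) = A at *
    generalize Lagrange.interpolate (Icc (i + 1) (i + m + 1)) y (fun k => f (y k)) = B at *
    have hc : ∀ (A : ℝ[X]) (a b : ℝ), A.coeff (m + 1) = 0 →
        (A * Lagrange.basisDivisor a b).coeff (m + 1) = (a - b)⁻¹ * A.coeff m := by
      intro A a b hA
      rw [Lagrange.basisDivisor, mul_left_comm, coeff_C_mul, mul_sub, coeff_sub, coeff_mul_X,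
        coeff_mul_C, hA]
      ring
    rw [coeff_add, hc _ _ _ d1, hc _ _ _ d2]
    have g1 : y i - y (i + m + 1) ≠ 0 := sub_ne_zero.2 hne
    have g2 : y (i + m + 1) - y i ≠ 0 := sub_ne_zero.2 hne.symm
    rw [← neg_sub (y (i + m + 1)) (y i)]
    field_simp
    ring

lemma neville_eq (X : ℕ → ℝ) (x : ℝ) (g : ℕ → ℝ) (m : ℕ) : ∀ i : ℕ,
    Set.InjOn X (Icc i (i + m) : Finset ℕ) →
    neville X x g m i = (Lagrange.interpolate (Icc i (i + m)) X g).eval x := by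
  induction m with
  | zero =>
    intro i _
    simp [neville]
  | succ m ih =>
    intro i hinj
    have hne : X i ≠ X (i + m + 1) := fun h => by
      have := hinj (by simp) (by simp; omega) h
      omega
    have h1 : Set.InjOn X (Icc i (i + m) : Finset ℕ) := hinj.mono (by
      intro a; simp only [coe_Icc, Set.mem_Icc]; omega)
    have h2 : Set.InjOn X (Icc (i + 1) (i + 1 + m) : Finset ℕ) := hinj.mono (by
      intro a; simp only [coe_Icc, Set.mem_Icc]; omega)
    rw [neville, ih i h1, ih (i + 1) h2, show i + 1 + m = i + m + 1 by omega,
      show i + (m + 1) = i + m + 1 by omega, show m + 1 + i = i + m + 1 by omega]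
    rw [Lagrange.interpolate_eq_add_interpolate_erase g (s := Icc i (i + m + 1)) hinj
      (i := i) (j := i + m + 1) (by simp; omega) (by simp; omega) (by omega), erase_Icc_right,
      erase_Icc_left]
    simp only [Lagrange.basisDivisor, eval_add, eval_mul, eval_C, eval_sub, eval_X]
    have g1 : X i - X (i + m + 1) ≠ 0 := sub_ne_zero.2 hne
    have g2 : X (i + m + 1) - X i ≠ 0 := sub_ne_zero.2 hne.symm
    rw [← neg_sub (X (i + m + 1)) (X i)]
    field_simp
    ring

lemma divDiff_mul (f : ℝ → ℝ) (X : ℕ → ℝ) (r : ℕ) (t : ℝ)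
    (hinj : Set.InjOn X (range r : Finset ℕ)) (ht : ∀ i < r, X i ≠ t) :
    divDiff f (fun i => if i = 0 then t else X (i - 1)) 0 r * ∏ i ∈ range r, (t - X i)
      = f t - (Lagrange.interpolate (range r) X (fun k => f (X k))).eval t := by
  set y : ℕ → ℝ := fun i => if i = 0 then t else X (i - 1) with hy
  have hy0 : y 0 = t := by simp [hy]
  have hyS : ∀ i, y (i + 1) = X i := by intro i; simp [hy]
  have hyinj : Set.InjOn y (Icc 0 (0 + r) : Finset ℕ) := by
    intro a ha b hb hab
    simp only [coe_Icc, Set.mem_Icc] at ha hb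
    rcases a with _ | a <;> rcases b with _ | b
    · rfl
    · rw [hy0, hyS] at hab; exact absurd hab.symm (ht b (by omega))
    · rw [hy0, hyS] at hab; exact absurd hab (ht a (by omega))
    · rw [hyS, hyS] at hab
      rw [hinj (by simp; omega) (by simp; omega) hab]
  have hD := divDiff_eq f y r 0 hyinj
  rw [zero_add] at hD hyinj
  rw [hD]
  set I := Lagrange.interpolate (Icc 0 r) y (fun k => f (y k)) with hI
  set P := Lagrange.interpolate (range r) X (fun k => f (X k)) with hP
  have hIdeg : I.degree < ((r + 1 : ℕ) : WithBot ℕ) := by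
    simpa only [card_range, Nat.card_Icc, Nat.sub_zero] using Lagrange.degree_interpolate_lt (fun k => f (y k)) hyinj
  have hPdeg : P.degree < (r : WithBot ℕ) := by
    simpa only [card_range, Nat.card_Icc, Nat.sub_zero] using Lagrange.degree_interpolate_lt (fun k => f (X k)) hinj
  have hNdeg : (Lagrange.nodal (range r) X).natDegree = r := by simp
  have hNlead : (Lagrange.nodal (range r) X).coeff r = 1 := by
    have := Lagrange.nodal_monic (s := range r) (v := X)
    rw [Monic, leadingCoeff, hNdeg] at this
    exact this
  have hzero : I - P - C (I.coeff r) * Lagrange.nodal (range r) X = 0 := by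
    apply Polynomial.eq_zero_of_degree_lt_of_eval_index_eq_zero (range r) hinj
    · rw [card_range, degree_lt_iff_coeff_zero]
      intro m hm
      rw [coeff_sub, coeff_sub, coeff_C_mul,
        coeff_eq_zero_of_degree_lt (hPdeg.trans_le (by exact_mod_cast hm))]
      rcases hm.eq_or_lt with rfl | hm
      · rw [hNlead]; ring
      · rw [coeff_eq_zero_of_degree_lt (hIdeg.trans_le (by exact_mod_cast hm)),
          coeff_eq_zero_of_natDegree_lt (p := Lagrange.nodal (range r) X) (n := m)
            (by rw [hNdeg]; exact hm)]
        ring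
    · intro i hi
      have a1 : I.eval (X i) = f (X i) := by
        have := Lagrange.eval_interpolate_at_node (fun k => f (y k)) hyinj (i := i + 1)
          (by simp at hi ⊢; omega)
        simpa only [hyS] using this
      have a2 : P.eval (X i) = f (X i) :=
        Lagrange.eval_interpolate_at_node (fun k => f (X k)) hinj hi
      rw [eval_sub, eval_sub, eval_mul, a1, a2, Lagrange.eval_nodal_at_node hi]
      ring
  have h := congrArg (eval t) hzero
  have a1 : I.eval t = f t := by
    have := Lagrange.eval_interpolate_at_node (fun k => f (y k)) hyinj (i := 0) (by simp)
    simpa only [hy0] using this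
  rw [eval_sub, eval_sub, eval_mul, eval_C, Lagrange.eval_nodal, a1, eval_zero] at h
  linarith

theorem stmt_0 (p q : ℝ) (hpq : p < q) (r n : ℕ) (hr : 1 ≤ r) (hrn : r ≤ n)
    (f : ℝ → ℝ) (hf : ContDiffOn ℝ (n + 1 : ℕ) f (Set.Icc p q))
    (x : ℝ) (X : ℕ → ℝ)
    (hx : x ∈ Set.Icc p q) (hX : ∀ i ≤ n, X i ∈ Set.Icc p q)
    (hxX : ∀ i ≤ n, X i ≠ x)
    (hXX : ∀ i j, i ≤ n → j ≤ n → i ≠ j → X i ≠ X j) :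
    ∃ ξ ∈ convexHull ℝ (insert x (X '' Set.Iic n)),
      divDiff f (fun i => if i = 0 then x else X (i - 1)) 0 r
        = neville X x (fun j => divDiff f (fun i => if i = 0 then X j else X (i - 1)) 0 r) (n - r) r
          + iteratedDerivWithin (n + 1) f (Set.Icc p q) ξ / (Nat.factorial (n + 1) : ℝ)
            * ∏ i ∈ Finset.Icc r n, (x - X i) := by
  have hinjn : ∀ s : Finset ℕ, (∀ a ∈ s, a ≤ n) → Set.InjOn X (s : Finset ℕ) := by
    intro s hs a ha b hb hab
    by_contra hne
    exact hXX a b (hs a ha) (hs b hb) hne hab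
  have hinjr : Set.InjOn X (range r : Finset ℕ) :=
    hinjn _ (by intro a ha; simp at ha; omega)
  have hinjQ : Set.InjOn X (Finset.Icc r n : Finset ℕ) :=
    hinjn _ (by intro a ha; simp at ha; omega)
  have hinjQ' : Set.InjOn X (Finset.Icc r (r + (n - r)) : Finset ℕ) :=
    hinjn _ (by intro a ha; simp at ha; omega)
  rw [neville_eq X x _ (n - r) r hinjQ', show r + (n - r) = n by omega]
  set g : ℕ → ℝ := fun j => divDiff f (fun i => if i = 0 then X j else X (i - 1)) 0 r with hg
  set G := divDiff f (fun i => if i = 0 then x else X (i - 1)) 0 r with hG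
  set P := Lagrange.interpolate (range r) X (fun k => f (X k)) with hP
  set Q := Lagrange.interpolate (Finset.Icc r n) X g with hQ
  set W := Lagrange.nodal (range r) X with hW
  set N := Lagrange.nodal (range (n + 1)) X with hN
  have hGx : G * W.eval x = f x - P.eval x := by
    rw [hW, Lagrange.eval_nodal]
    exact divDiff_mul f X r x hinjr (fun i hi => hxX i (by omega))
  have hsplit : N.eval x = W.eval x * ∏ i ∈ Finset.Icc r n, (x - X i) := by
    rw [hW, hN, Lagrange.eval_nodal, Lagrange.eval_nodal]
    rw [← prod_range_mul_prod_Ico _ (show r ≤ n + 1 by omega)]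
    rfl
  have hWx : W.eval x ≠ 0 := by
    rw [hW, Lagrange.eval_nodal, prod_ne_zero_iff]
    intro i hi
    simp at hi
    exact sub_ne_zero.2 (hxX i (by omega)).symm
  have hPr : ∏ i ∈ Finset.Icc r n, (x - X i) ≠ 0 := by
    rw [prod_ne_zero_iff]
    intro i hi
    simp at hi
    exact sub_ne_zero.2 (hxX i (by omega)).symm
  set Pr := ∏ i ∈ Finset.Icc r n, (x - X i) with hPi
  set K := (G - Q.eval x) / Pr with hK
  set T := P + W * Q + C K * N with hT
  have hzX : ∀ i ≤ n, f (X i) - T.eval (X i) = 0 := by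
    intro i hi
    have hNi : N.eval (X i) = 0 := Lagrange.eval_nodal_at_node (by simp; omega)
    rw [hT, eval_add, eval_add, eval_mul, eval_mul, hNi]
    by_cases hir : i < r
    · have hWi : W.eval (X i) = 0 := Lagrange.eval_nodal_at_node (by simp; omega)
      have hPi : P.eval (X i) = f (X i) :=
        Lagrange.eval_interpolate_at_node (fun k => f (X k)) hinjr (by simp; omega)
      rw [hWi, hPi]; ring
    · have hQi : Q.eval (X i) = g i :=
        Lagrange.eval_interpolate_at_node g hinjQ (by simp; omega)
      have := divDiff_mul f X r (X i) hinjr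
        (fun j hj => hXX j i (by omega) hi (by omega))
      rw [← Lagrange.eval_nodal] at this
      change g i * W.eval (X i) = f (X i) - P.eval (X i) at this
      rw [hQi]
      linarith
  have hzx : f x - T.eval x = 0 := by
    rw [hT, eval_add, eval_add, eval_mul, eval_mul, hsplit, eval_C, hK]
    field_simp
    linarith
  -- degree facts
  have hNdeg : N.natDegree = n + 1 := by simp [hN]
  have hNlead : N.coeff (n + 1) = 1 := by
    have := Lagrange.nodal_monic (s := range (n + 1)) (v := X)
    rw [Monic, leadingCoeff, ← hN, hNdeg] at this
    exact this
  have hPdeg : P.natDegree ≤ n := by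
    have : P.degree < (r : WithBot ℕ) := by
      simpa only [card_range, Nat.card_Icc, Nat.sub_zero] using Lagrange.degree_interpolate_lt (fun k => f (X k)) hinjr
    have h2 := natDegree_le_of_degree_le this.le
    omega
  have hQdeg : Q.natDegree ≤ n - r := by
    have : Q.degree < ((n + 1 - r : ℕ) : WithBot ℕ) := by
      simpa only [card_range, Nat.card_Icc, Nat.sub_zero] using Lagrange.degree_interpolate_lt g hinjQ
    rw [natDegree_le_iff_degree_le]
    rw [show n + 1 - r = (n - r) + 1 by omega] at this
    exact Order.le_of_lt_succ this
  have hWdeg : W.natDegree = r := by simp [hW]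
  have hWQ : (W * Q).natDegree ≤ n := by
    refine natDegree_mul_le.trans ?_
    omega
  have hTdeg : T.natDegree ≤ n + 1 := by
    refine (natDegree_add_le _ _).trans (max_le ((natDegree_add_le _ _).trans
      (max_le (by omega) (by omega))) ?_)
    exact (natDegree_C_mul_le _ _).trans hNdeg.le
  have hTc : T.coeff (n + 1) = K := by
    rw [hT, coeff_add, coeff_add, coeff_C_mul, hNlead,
      coeff_eq_zero_of_natDegree_lt (by omega : P.natDegree < n + 1),
      coeff_eq_zero_of_natDegree_lt (by omega : (W * Q).natDegree < n + 1)]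
    ring
  -- ordering the nodes
  set S : Finset ℝ := insert x ((range (n + 1)).image X) with hS
  have hScard : S.card = n + 2 := by
    rw [hS, card_insert_of_notMem, card_image_of_injOn, card_range]
    · exact hinjn _ (by intro a ha; simp at ha; omega)
    · simp only [mem_image, mem_range, not_exists, not_and]
      intro i hi
      exact hxX i (by omega)
  have hSmem : ∀ s ∈ S, s ∈ Set.Icc p q ∧ f s - T.eval s = 0 ∧
      s ∈ insert x (X '' Set.Iic n) := by
    intro s hs
    rw [hS, mem_insert, mem_image] at hs
    rcases hs with rfl | ⟨i, hi, rfl⟩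
    · exact ⟨hx, hzx, Set.mem_insert _ _⟩
    · simp at hi
      exact ⟨hX i (by omega), hzX i (by omega),
        Set.mem_insert_of_mem _ ⟨i, by simp; omega, rfl⟩⟩
  let e := S.orderEmbOfFin hScard
  let z : ℕ → ℝ := fun i => if h : i < n + 2 then e ⟨i, h⟩ else 0
  have hze : ∀ i (h : i < n + 2), z i = e ⟨i, h⟩ := fun i h => dif_pos h
  have hzS : ∀ i ≤ n + 1, z i ∈ S := by
    intro i hi
    rw [hze i (by omega)]
    exact S.orderEmbOfFin_mem hScard _
  have hTsmooth : ContDiff ℝ (n + 1 : ℕ) (fun t => T.eval t) := by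
    simpa using T.contDiff_aeval (𝕜 := ℝ) (n + 1 : ℕ)
  obtain ⟨ξ, hξ, hξ0⟩ := gen_rolle p q hpq (n + 1) (f - fun t => T.eval t) z
    (hf.sub hTsmooth.contDiffOn)
    (fun i hi => (hSmem _ (hzS i hi)).1)
    (fun i hi => by
      rw [hze i (by omega), hze (i + 1) (by omega)]
      exact e.strictMono (by simp))
    (fun i hi => (hSmem _ (hzS i hi)).2.1)
  have hξpq : ξ ∈ Set.Icc p q :=
    ⟨(hSmem _ (hzS 0 (by omega))).1.1.trans hξ.1, hξ.2.trans (hSmem _ (hzS (n + 1) le_rfl)).1.2⟩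
  refine ⟨ξ, ?_, ?_⟩
  · have h0 := subset_convexHull ℝ _ (hSmem _ (hzS 0 (by omega))).2.2
    have h1 := subset_convexHull ℝ _ (hSmem _ (hzS (n + 1) le_rfl)).2.2
    exact (convex_convexHull ℝ _).ordConnected.out h0 h1 hξ
  · have hu := uniqueDiffOn_Icc hpq
    rw [iteratedDerivWithin_sub hξpq hu (hf ξ hξpq) hTsmooth.contDiffAt.contDiffWithinAt,
      iteratedDerivWithin_eq_iteratedDeriv hu hTsmooth.contDiffAt hξpq,
      iteratedDeriv_top _ _ hTdeg, hTc] at hξ0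
    have hfac : ((n + 1).factorial : ℝ) ≠ 0 := by positivity
    rw [sub_eq_zero.1 hξ0, mul_div_cancel_left₀ _ hfac, hK]
    field_simp
    ring
end

section
/- Let p < q be reals, let 1 ≤ r ≤ n be integers, let f be (n+1)-times continuously differentiable on [p,q], and let x, x_0, …, x_n be pairwise distinct points of [p,q]. Then there exists ξ in the smallest closed interval containing x, x_0, …, x_n such that f[x, x_0, …, x_{r−1}] = d_{r,r+1,…,n}[x] + (f^{(n+1)}(ξ)/(n+1)!)·∏_{i=r}^{n}(x − x_i). -/
open Polynomial in
theorem aux_coeff_mul_basisDivisor (p : ℝ[X]) (d : ℕ) (hp : p.degree < ((d + 1 : ℕ) : WithBot ℕ))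
    (a b : ℝ) :
    (p * Lagrange.basisDivisor a b).coeff (d + 1) = p.coeff d / (a - b) := by
  have h0 : p.coeff (d + 1) = 0 := Polynomial.coeff_eq_zero_of_degree_lt hp
  unfold Lagrange.basisDivisor
  rw [mul_left_comm, Polynomial.coeff_C_mul, mul_sub, Polynomial.coeff_sub,
    Polynomial.coeff_mul_X, Polynomial.coeff_mul_C, h0]
  rw [div_eq_mul_inv]; ring

theorem aux_divDiff_interp (f : ℝ → ℝ) (y : ℕ → ℝ) (d : ℕ) : ∀ i,
    Set.InjOn y (Finset.Icc i (i + d) : Finset ℕ) →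
    divDiff f y i (i + d)
      = (Lagrange.interpolate (Finset.Icc i (i + d)) y (fun k => f (y k))).coeff d := by
  induction d with
  | zero =>
    intro i _
    rw [divDiff]
    simp
  | succ d ih =>
    intro i hinj
    have e1 : (Finset.Icc i (i + (d + 1))).erase i = Finset.Icc (i + 1) (i + 1 + d) := by
      ext k; simp only [Finset.mem_erase, Finset.mem_Icc]; omega
    have e2 : (Finset.Icc i (i + (d + 1))).erase (i + (d + 1)) = Finset.Icc i (i + d) := by
      ext k; simp only [Finset.mem_erase, Finset.mem_Icc]; omega
    have i1 : Set.InjOn y (Finset.Icc (i + 1) (i + 1 + d) : Finset ℕ) := by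
      rw [← e1]; exact hinj.mono (by exact_mod_cast Finset.erase_subset _ _)
    have i2 : Set.InjOn y (Finset.Icc i (i + d) : Finset ℕ) := by
      rw [← e2]; exact hinj.mono (by exact_mod_cast Finset.erase_subset _ _)
    have hne : y (i + (d + 1)) ≠ y i := by
      intro h
      have := hinj (by simp) (by simp) h
      omega
    have d1 := Lagrange.degree_interpolate_lt (fun k => f (y k)) i1
    have d2 := Lagrange.degree_interpolate_lt (fun k => f (y k)) i2
    rw [Nat.card_Icc, show i + 1 + d + 1 - (i + 1) = d + 1 by omega] at d1
    rw [Nat.card_Icc, show i + d + 1 - i = d + 1 by omega] at d2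
    rw [Lagrange.interpolate_eq_add_interpolate_erase (i := i) (j := i + (d + 1)) _ hinj (by simp)
      (by simp) (by omega), e1, e2, Polynomial.coeff_add, aux_coeff_mul_basisDivisor _ _ d1,
      aux_coeff_mul_basisDivisor _ _ d2, ← ih _ i1, ← ih _ i2]
    rw [divDiff, dif_neg (by omega), show i + (d + 1) - 1 = i + d by omega,
      show i + (d + 1) = i + 1 + d by omega]
    rw [show i + (d + 1) = i + 1 + d by omega] at hne
    have h1 := sub_ne_zero.mpr hne
    have h2 := sub_ne_zero.mpr hne.symm
    field_simp
    ring

open Polynomial in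
theorem aux_divDiff_coeff (f : ℝ → ℝ) (y : ℕ → ℝ) (d : ℕ) (P : ℝ[X])
    (hinj : Set.InjOn y (Finset.Icc 0 d : Finset ℕ)) (hdeg : P.degree < ((d + 1 : ℕ) : WithBot ℕ))
    (hP : ∀ k ≤ d, P.eval (y k) = f (y k)) : divDiff f y 0 d = P.coeff d := by
  have h := aux_divDiff_interp f y d 0 (by simpa using hinj)
  rw [zero_add] at h
  rw [h, Lagrange.eq_interpolate_of_eval_eq (f := P) (fun k => f (y k)) hinj (by simpa using hdeg)
    (fun k hk => hP k (Finset.mem_Icc.mp hk).2)]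

/-- Newton form of the divided difference. -/
theorem aux_newton (f : ℝ → ℝ) (X : ℕ → ℝ) (r : ℕ) (hinj : Set.InjOn X (Finset.range r : Finset ℕ))
    (t : ℝ) (ht : ∀ i < r, X i ≠ t) :
    f t = (Lagrange.interpolate (Finset.range r) X (fun k => f (X k))).eval t
      + (∏ i ∈ Finset.range r, (t - X i))
        * divDiff f (fun i => if i = 0 then t else X (i - 1)) 0 r := by
  have hN : (∏ i ∈ Finset.range r, (t - X i)) ≠ 0 :=
    Finset.prod_ne_zero_iff.mpr fun i hi =>
      sub_ne_zero.mpr (ht i (Finset.mem_range.mp hi)).symm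
  set Q := Lagrange.interpolate (Finset.range r) X (fun k => f (X k)) with hQ
  set c := (f t - Q.eval t) / ∏ i ∈ Finset.range r, (t - X i) with hc
  have hQd : Q.degree < (r : WithBot ℕ) := by
    have h := Lagrange.degree_interpolate_lt (fun k => f (X k)) hinj
    rwa [Finset.card_range] at h
  have hNd : (Lagrange.nodal (Finset.range r) X).natDegree = r := by
    simp [Lagrange.natDegree_nodal]
  have key := aux_divDiff_coeff f (fun i => if i = 0 then t else X (i - 1)) r
    (Q + Polynomial.C c * Lagrange.nodal (Finset.range r) X) ?_ ?_ ?_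
  · rw [key, Polynomial.coeff_add, Polynomial.coeff_C_mul,
      Polynomial.coeff_eq_zero_of_degree_lt hQd]
    have : (Lagrange.nodal (Finset.range r) X).coeff r = 1 := by
      have := (Lagrange.nodal_monic (s := Finset.range r) (v := X)).coeff_natDegree
      rwa [hNd] at this
    rw [this, hc]
    field_simp
    ring
  · intro a ha b hb hab
    simp only [Finset.coe_Icc, Set.mem_Icc] at ha hb
    rcases Nat.eq_zero_or_pos a with rfl | ha0 <;> rcases Nat.eq_zero_or_pos b with rfl | hb0
    · rfl
    · simp [hb0.ne'] at hab
      exact absurd hab.symm (ht _ (by omega))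
    · simp [ha0.ne'] at hab
      exact absurd hab (ht _ (by omega))
    · simp [ha0.ne', hb0.ne'] at hab
      have := hinj (by simp; omega) (by simp; omega) hab
      omega
  · refine lt_of_le_of_lt (Polynomial.degree_add_le _ _) (max_lt (hQd.trans ?_) ?_)
    · exact_mod_cast Nat.lt_succ_self r
    · refine lt_of_le_of_lt Polynomial.degree_le_natDegree ?_
      have := Polynomial.natDegree_C_mul_le c (Lagrange.nodal (Finset.range r) X)
      exact_mod_cast (by omega)
  · intro k hk
    rcases Nat.eq_zero_or_pos k with rfl | hk0
    · simp only [if_true, Polynomial.eval_add, Polynomial.eval_mul, Polynomial.eval_C,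
        Lagrange.eval_nodal]
      rw [hc]; field_simp; ring
    · have hm : k - 1 ∈ Finset.range r := by simp; omega
      simp only [hk0.ne', if_false, Polynomial.eval_add, Polynomial.eval_mul, Polynomial.eval_C]
      rw [Lagrange.eval_nodal_at_node hm, hQ, Lagrange.eval_interpolate_at_node _ hinj hm]
      ring

theorem aux_eval_basisDivisor (a b x : ℝ) :
    (Lagrange.basisDivisor a b).eval x = (x - b) / (a - b) := by
  simp [Lagrange.basisDivisor, div_eq_inv_mul]

theorem aux_aitken (X : ℕ → ℝ) (x : ℝ) (g : ℕ → ℝ) (r n : ℕ)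
    (hXX : ∀ i j, i ≤ n → j ≤ n → i ≠ j → X i ≠ X j) (d : ℕ) : ∀ j, r + d < j → j ≤ n →
    aitken X x g r (r + d) j
      = (Lagrange.interpolate (insert j (Finset.Icc r (r + d))) X g).eval x := by
  induction d with
  | zero =>
    intro j hj hjn
    have hne := hXX r j (by omega) hjn (by omega)
    rw [aitken, dif_pos (by omega)]
    have hinj : Set.InjOn X (insert j (Finset.Icc r (r + 0)) : Finset ℕ) := by
      intro a ha b hb hab
      simp at ha hb
      by_contra hc
      exact hXX a b (by omega) (by omega) hc hab
    have e1 : (insert j (Finset.Icc r (r + 0))).erase j = {r} := by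
      ext k; simp only [Finset.mem_erase, Finset.mem_insert, Finset.mem_Icc, Finset.mem_singleton]
      omega
    have e2 : (insert j (Finset.Icc r (r + 0))).erase r = {j} := by
      ext k; simp only [Finset.mem_erase, Finset.mem_insert, Finset.mem_Icc, Finset.mem_singleton]
      omega
    rw [Lagrange.interpolate_eq_add_interpolate_erase (i := r) (j := j) _ hinj (by simp)
      (by simp) (by omega), e1, e2]
    simp only [Lagrange.interpolate_singleton, Polynomial.eval_add, Polynomial.eval_mul,
      Polynomial.eval_C, aux_eval_basisDivisor]
    have h1 := sub_ne_zero.mpr hne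
    have h2 := sub_ne_zero.mpr hne.symm
    field_simp
    ring
  | succ d ih =>
    intro j hj hjn
    have hne := hXX (r + (d + 1)) j (by omega) hjn (by omega)
    rw [aitken, dif_neg (by omega), show r + (d + 1) - 1 = r + d by omega,
      ih j (by omega) hjn, ih (r + (d + 1)) (by omega) (by omega)]
    have hinj : Set.InjOn X (insert j (Finset.Icc r (r + (d + 1))) : Finset ℕ) := by
      intro a ha b hb hab
      simp at ha hb
      by_contra hc
      exact hXX a b (by omega) (by omega) hc hab
    have e1 : (insert j (Finset.Icc r (r + (d + 1)))).erase j
        = insert (r + (d + 1)) (Finset.Icc r (r + d)) := by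
      ext k; simp only [Finset.mem_erase, Finset.mem_insert, Finset.mem_Icc]
      omega
    have e2 : (insert j (Finset.Icc r (r + (d + 1)))).erase (r + (d + 1))
        = insert j (Finset.Icc r (r + d)) := by
      ext k; simp only [Finset.mem_erase, Finset.mem_insert, Finset.mem_Icc]
      omega
    rw [Lagrange.interpolate_eq_add_interpolate_erase (i := r + (d + 1)) (j := j) _ hinj (by simp)
      (by simp) (by omega), e1, e2]
    simp only [Polynomial.eval_add, Polynomial.eval_mul, aux_eval_basisDivisor]
    have h1 := sub_ne_zero.mpr hne
    have h2 := sub_ne_zero.mpr hne.symm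
    field_simp
    ring

theorem aux_aitkenLast (X : ℕ → ℝ) (x : ℝ) (g : ℕ → ℝ) (r n : ℕ) (hrn : r ≤ n)
    (hXX : ∀ i j, i ≤ n → j ≤ n → i ≠ j → X i ≠ X j) :
    aitkenLast X x g r n = (Lagrange.interpolate (Finset.Icc r n) X g).eval x := by
  unfold aitkenLast
  split_ifs with h
  · obtain rfl : n = r := le_antisymm h hrn
    simp
  · have := aux_aitken X x g r n hXX (n - 1 - r) n (by omega) le_rfl
    rw [show r + (n - 1 - r) = n - 1 by omega] at this
    rw [this]
    congr 3
    ext k; simp only [Finset.mem_insert, Finset.mem_Icc]; omega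

theorem aux_rolle (p q : ℝ) (hpq : p < q) (m : ℕ) : ∀ (g : ℝ → ℝ),
    ContDiffOn ℝ (m : ℕ) g (Set.Icc p q) → ∀ z : Fin (m + 1) → ℝ, StrictMono z →
    (∀ i, z i ∈ Set.Icc p q) → (∀ i, g (z i) = 0) →
    ∃ ξ ∈ Set.Icc (z 0) (z (Fin.last m)), iteratedDerivWithin m g (Set.Icc p q) ξ = 0 := by
  induction m with
  | zero =>
    intro g _ z _ _ hz
    exact ⟨z 0, by simp, by simpa using hz 0⟩
  | succ m ih =>
    intro g hg z hmono hmem hz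
    have hu := uniqueDiffOn_Icc hpq
    have hR : ∀ i : Fin (m + 1), ∃ c ∈ Set.Ioo (z i.castSucc) (z i.succ),
        derivWithin g (Set.Icc p q) c = 0 := by
      intro i
      have hsub : Set.Icc (z i.castSucc) (z i.succ) ⊆ Set.Icc p q :=
        Set.Icc_subset_Icc (hmem _).1 (hmem _).2
      obtain ⟨c, hc, hd⟩ := exists_deriv_eq_zero (f := g) (hmono (Fin.castSucc_lt_succ (i := i)))
        (hg.continuousOn.mono hsub) (by rw [hz, hz])
      refine ⟨c, hc, ?_⟩
      rw [derivWithin_of_mem_nhds, hd]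
      exact Icc_mem_nhds ((hmem _).1.trans_lt hc.1) (hc.2.trans_le (hmem _).2)
    choose c hc hd using hR
    obtain ⟨ξ, hξ, h0⟩ := ih (derivWithin g (Set.Icc p q))
      (hg.derivWithin hu (by norm_cast)) c
      (Fin.strictMono_iff_lt_succ.mpr fun i =>
        (hc i.castSucc).2.trans (by
          have := (hc i.succ).1
          rwa [← Fin.succ_castSucc] at this))
      (fun i => ⟨(hmem _).1.trans (hc i).1.le, (hc i).2.le.trans (hmem _).2⟩) hd
    refine ⟨ξ, ⟨(hc 0).1.le.trans hξ.1, hξ.2.trans (hc (Fin.last m)).2.le⟩, ?_⟩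
    rw [iteratedDerivWithin_succ', h0]

open Polynomial in
theorem aux_iteratedDeriv_poly (W : ℝ[X]) (m : ℕ) :
    iteratedDeriv m (fun t => W.eval t) = fun t => (derivative^[m] W).eval t := by
  induction m with
  | zero => simp
  | succ m ih =>
    rw [iteratedDeriv_succ, ih]
    funext t
    rw [Polynomial.deriv, Function.iterate_succ_apply']

open Polynomial in
theorem aux_mean (p q : ℝ) (hpq : p < q) (m : ℕ) (f : ℝ → ℝ)
    (hf : ContDiffOn ℝ (m : ℕ) f (Set.Icc p q)) (s : Finset ℝ) (hs : s.card = m + 1)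
    (hsub : ∀ t ∈ s, t ∈ Set.Icc p q) (W : ℝ[X]) (hW : W.natDegree ≤ m)
    (hWf : ∀ t ∈ s, W.eval t = f t) :
    ∃ ξ ∈ convexHull ℝ (s : Set ℝ),
      iteratedDerivWithin m f (Set.Icc p q) ξ / (m.factorial : ℝ) = W.coeff m := by
  have hu := uniqueDiffOn_Icc hpq
  have hWc : ContDiff ℝ (m : ℕ) (fun t => W.eval t) := by
    simpa using W.contDiff_aeval (𝕜 := ℝ) (n := ((m : ℕ) : WithTop ℕ∞))
  obtain ⟨ξ, hξ, h0⟩ := aux_rolle p q hpq m (f - fun t => W.eval t) (hf.sub hWc.contDiffOn)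
    (s.orderEmbOfFin hs) (s.orderEmbOfFin hs).strictMono
    (fun i => hsub _ (s.orderEmbOfFin_mem hs i))
    (fun i => by simp [hWf _ (s.orderEmbOfFin_mem hs i)])
  have hmem0 := s.orderEmbOfFin_mem hs 0
  have hmem1 := s.orderEmbOfFin_mem hs (Fin.last m)
  have hξI : ξ ∈ Set.Icc p q := ⟨(hsub _ hmem0).1.trans hξ.1, hξ.2.trans (hsub _ hmem1).2⟩
  refine ⟨ξ, ?_, ?_⟩
  · have := (convex_convexHull ℝ (s : Set ℝ)).ordConnected.out
      (subset_convexHull ℝ (s : Set ℝ) hmem0) (subset_convexHull ℝ (s : Set ℝ) hmem1)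
    exact this hξ
  · rw [iteratedDerivWithin_sub hξI hu (hf ξ hξI) hWc.contDiffAt.contDiffWithinAt,
      iteratedDerivWithin_eq_iteratedDeriv hu hWc.contDiffAt hξI, aux_iteratedDeriv_poly] at h0
    have hc : derivative^[m] W = C ((m.factorial : ℝ) * W.coeff m) := by
      have hd : (derivative^[m] W).natDegree ≤ 0 := by
        have := Polynomial.natDegree_iterate_derivative W m
        omega
      rw [Polynomial.eq_C_of_natDegree_le_zero hd, Polynomial.coeff_iterate_derivative]
      simp [Nat.descFactorial_self]
    simp only [hc, Polynomial.eval_C] at h0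
    have hfac : (m.factorial : ℝ) ≠ 0 := by positivity
    field_simp
    linarith


theorem aux_natDegree_lt (P : Polynomial ℝ) (k : ℕ) (h : P.degree < (k : WithBot ℕ)) (hk : 0 < k) :
    P.natDegree < k := by
  by_cases h0 : P = 0
  · simpa [h0] using hk
  · exact (Polynomial.natDegree_lt_iff_degree_lt h0).mpr h

theorem stmt_1 (p q : ℝ) (hpq : p < q) (r n : ℕ) (hr : 1 ≤ r) (hrn : r ≤ n)
    (f : ℝ → ℝ) (hf : ContDiffOn ℝ (n + 1 : ℕ) f (Set.Icc p q))
    (x : ℝ) (X : ℕ → ℝ)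
    (hx : x ∈ Set.Icc p q) (hX : ∀ i ≤ n, X i ∈ Set.Icc p q)
    (hxX : ∀ i ≤ n, X i ≠ x)
    (hXX : ∀ i j, i ≤ n → j ≤ n → i ≠ j → X i ≠ X j) :
    ∃ ξ ∈ convexHull ℝ (insert x (X '' Set.Iic n)),
      divDiff f (fun i => if i = 0 then x else X (i - 1)) 0 r
        = aitkenLast X x (fun j => divDiff f (fun i => if i = 0 then X j else X (i - 1)) 0 r) r n
          + iteratedDerivWithin (n + 1) f (Set.Icc p q) ξ / (Nat.factorial (n + 1) : ℝ)
            * ∏ i ∈ Finset.Icc r n, (x - X i) := by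
  classical
  set g : ℕ → ℝ := fun j => divDiff f (fun i => if i = 0 then X j else X (i - 1)) 0 r with hg
  have hinj : Set.InjOn X (Finset.range r : Finset ℕ) := by
    intro a ha b hb hab
    simp at ha hb
    by_contra hc
    exact hXX a b (by omega) (by omega) hc hab
  have hinj' : Set.InjOn X (Finset.Icc r n : Finset ℕ) := by
    intro a ha b hb hab
    simp at ha hb
    by_contra hc
    exact hXX a b (by omega) (by omega) hc hab
  rw [aux_aitkenLast X x g r n hrn hXX]
  set H := divDiff f (fun i => if i = 0 then x else X (i - 1)) 0 r with hH
  set Q := Lagrange.interpolate (Finset.range r) X (fun k => f (X k)) with hQ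
  set N := Lagrange.nodal (Finset.range r) X with hN
  set M := Lagrange.nodal (Finset.Icc r n) X with hM
  set G := Lagrange.interpolate (Finset.Icc r n) X g with hG
  have hMx : (∏ i ∈ Finset.Icc r n, (x - X i)) ≠ 0 :=
    Finset.prod_ne_zero_iff.mpr fun i hi =>
      sub_ne_zero.mpr (hxX i (Finset.mem_Icc.mp hi).2).symm
  set K := (H - G.eval x) / ∏ i ∈ Finset.Icc r n, (x - X i) with hK
  have hQd : Q.degree < (r : WithBot ℕ) := by
    have h := Lagrange.degree_interpolate_lt (fun k => f (X k)) hinj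
    rwa [Finset.card_range] at h
  have hGd : G.degree < ((n + 1 - r : ℕ) : WithBot ℕ) := by
    have h := Lagrange.degree_interpolate_lt g hinj'
    rwa [Nat.card_Icc] at h
  have hNd : N.natDegree = r := by simp [hN, Lagrange.natDegree_nodal]
  have hMd : M.natDegree = n + 1 - r := by simp [hM, Lagrange.natDegree_nodal]
  have hNm : N.Monic := Lagrange.nodal_monic
  have hMm : M.Monic := Lagrange.nodal_monic
  have hQn : Q.natDegree < n + 1 :=
    lt_of_lt_of_le (aux_natDegree_lt Q r hQd (by omega)) (by omega)
  have hGn : G.natDegree < n + 1 - r := by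
    exact aux_natDegree_lt G _ hGd (by omega)
  have hNG : (N * G).natDegree < n + 1 := by
    have := Polynomial.natDegree_mul_le (p := N) (q := G)
    omega
  have hNM : (N * M).natDegree = n + 1 := by
    rw [hNm.natDegree_mul hMm]; omega
  have hNMc : (N * M).coeff (n + 1) = 1 := by
    have := (hNm.mul hMm).coeff_natDegree
    rwa [hNM] at this
  have hWd : (Q + N * G + Polynomial.C K * (N * M)).natDegree ≤ n + 1 := by
    refine Polynomial.natDegree_add_le_of_degree_le
      (Polynomial.natDegree_add_le_of_degree_le hQn.le hNG.le) ?_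
    exact (Polynomial.natDegree_C_mul_le _ _).trans hNM.le
  have hxnot : x ∉ (Finset.range (n + 1)).image X := by
    simp only [Finset.mem_image, Finset.mem_range, not_exists, not_and]
    intro i hi
    exact hxX i (by omega)
  have hcard : (insert x ((Finset.range (n + 1)).image X)).card = n + 1 + 1 := by
    rw [Finset.card_insert_of_notMem hxnot, Finset.card_image_of_injOn, Finset.card_range]
    intro a ha b hb hab
    simp at ha hb
    by_contra hc
    exact hXX a b (by omega) (by omega) hc hab
  have hs1 : ∀ t ∈ insert x ((Finset.range (n + 1)).image X), t ∈ Set.Icc p q := by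
    intro t ht
    simp only [Finset.mem_insert, Finset.mem_image, Finset.mem_range] at ht
    rcases ht with rfl | ⟨i, hi, rfl⟩
    · exact hx
    · exact hX i (by omega)
  have hs2 : ∀ t ∈ insert x ((Finset.range (n + 1)).image X),
      (Q + N * G + Polynomial.C K * (N * M)).eval t = f t := by
    intro t ht
    simp only [Finset.mem_insert, Finset.mem_image, Finset.mem_range] at ht
    simp only [Polynomial.eval_add, Polynomial.eval_mul, Polynomial.eval_C]
    rcases ht with rfl | ⟨i, hi, rfl⟩
    · rw [aux_newton f X r hinj t (fun i hi => hxX i (by omega)), ← hH, ← hQ, hN, hM,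
        Lagrange.eval_nodal, Lagrange.eval_nodal, hK]
      field_simp
      ring
    · by_cases hir : i < r
      · have hm : i ∈ Finset.range r := by simpa using hir
        rw [hN, Lagrange.eval_nodal_at_node hm, hQ, Lagrange.eval_interpolate_at_node _ hinj hm]
        ring
      · have hm : i ∈ Finset.Icc r n := by simp; omega
        rw [aux_newton f X r hinj (X i)
          (fun k hk => hXX k i (by omega) (by omega) (by omega)), ← hQ, hM,
          Lagrange.eval_nodal_at_node hm, hG, Lagrange.eval_interpolate_at_node _ hinj' hm, hN,
          Lagrange.eval_nodal]
        simp only [hg]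
        ring
  obtain ⟨ξ, hξ, hval⟩ := aux_mean p q hpq (n + 1) f hf
    (insert x ((Finset.range (n + 1)).image X)) hcard hs1
    (Q + N * G + Polynomial.C K * (N * M)) hWd hs2
  · refine ⟨ξ, ?_, ?_⟩
    · convert hξ using 2
      ext t
      simp
    · rw [hval, Polynomial.coeff_add, Polynomial.coeff_add, Polynomial.coeff_C_mul, hNMc,
        Polynomial.coeff_eq_zero_of_natDegree_lt hQn, Polynomial.coeff_eq_zero_of_natDegree_lt hNG,
        hK]
      field_simp
      ring
end

section
/- Let p < q be reals, let n ≥ 1 and k ≥ 0 be integers, let f be (n+k+1)-times continuously differentiable on [p,q], and let x, x_0, …, x_n be pairwise distinct points of [p,q]. Then there exists ξ in the smallest closed interval containing x, x_0, …, x_n such that Σ_{r=0}^{k} (f^{(k−r)}(x)/(k−r)!)·N_r(x) = Ñ^{(k)}_{0,1,…,n}[x] + (f^{(n+k+1)}(ξ)/(n+k+1)!)·∏_{i=0}^{n}(x − x_i). -/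
open Polynomial in
theorem nev_poly (X : ℕ → ℝ) (x : ℝ) (g : ℕ → ℝ) (n : ℕ)
    (hXX : ∀ i j, i ≤ n → j ≤ n → i ≠ j → X i ≠ X j) (i : ℕ) :
    ∀ j, j + i ≤ n → ∃ P : ℝ[X], P.natDegree ≤ i ∧ P.eval x = neville X x g i j ∧
      ∀ l, j ≤ l → l ≤ j + i → P.eval (X l) = g l := by
  induction i with
  | zero =>
    intro j hj
    refine ⟨C (g j), by simp, by simp [neville], ?_⟩
    intro l h1 h2
    have : l = j := by omega
    simp [this]
  | succ i ih =>
    intro j hj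
    obtain ⟨P1, d1, e1, v1⟩ := ih j (by omega)
    obtain ⟨P2, d2, e2, v2⟩ := ih (j + 1) (by omega)
    have hne : X (i + 1 + j) - X j ≠ 0 :=
      sub_ne_zero.2 (hXX _ _ (by omega) (by omega) (by omega))
    refine ⟨C (1 / (X (i + 1 + j) - X j)) *
      ((C (X (i + 1 + j)) - Polynomial.X) * P1 - (C (X j) - Polynomial.X) * P2), ?_, ?_, ?_⟩
    · refine (natDegree_C_mul_le _ _).trans ((natDegree_sub_le _ _).trans (max_le ?_ ?_))
      · refine natDegree_mul_le.trans ?_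
        have : (C (X (i + 1 + j)) - Polynomial.X : ℝ[X]).natDegree ≤ 1 := by compute_degree
        omega
      · refine natDegree_mul_le.trans ?_
        have : (C (X j) - Polynomial.X : ℝ[X]).natDegree ≤ 1 := by compute_degree
        omega
    · simp only [eval_mul, eval_sub, eval_C, eval_X, e1, e2, neville]
      ring
    · intro l h1 h2
      simp only [eval_mul, eval_sub, eval_C, eval_X]
      by_cases hl : l = j
      · subst hl
        rw [v1 l (by omega) (by omega)]
        field_simp
        ring
      · by_cases hl' : l = i + 1 + j
        · subst hl'
          rw [v2 _ (by omega) (by omega)]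
          field_simp
          ring
        · rw [v1 l (by omega) (by omega), v2 l (by omega) (by omega)]
          field_simp
          ring

theorem rolle_fin (p q : ℝ) (H : Set ℝ) (hH : Convex ℝ H) (hHI : H ⊆ Set.Icc p q)
    (G : ℝ → ℝ) (hG : ContinuousOn G (Set.Icc p q)) (S : Finset ℝ) (hS : ↑S ⊆ H)
    (hz : ∀ s ∈ S, G s = 0) :
    ∃ T : Finset ℝ, ↑T ⊆ H ∧ (∀ s ∈ T, derivWithin G (Set.Icc p q) s = 0) ∧ Disjoint T S ∧
      S.card ≤ T.card + 1 := by
  have key : ∀ a b : ℝ, ∃ c, a ∈ S → b ∈ S → a < b →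
      c ∈ Set.Ioo a b ∧ derivWithin G (Set.Icc p q) c = 0 := by
    intro a b
    by_cases h : a ∈ S ∧ b ∈ S ∧ a < b
    · obtain ⟨ha, hb, hab⟩ := h
      have ha' := hHI (hS ha)
      have hb' := hHI (hS hb)
      obtain ⟨c, hc, hd⟩ := exists_deriv_eq_zero hab
        (hG.mono (Set.Icc_subset_Icc ha'.1 hb'.2)) ((hz a ha).trans (hz b hb).symm)
      refine ⟨c, fun _ _ _ => ⟨hc, ?_⟩⟩
      rw [derivWithin_of_mem_nhds, hd]
      exact Icc_mem_nhds (lt_of_le_of_lt ha'.1 hc.1) (lt_of_lt_of_le hc.2 hb'.2)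
    · exact ⟨0, fun h1 h2 h3 => (h ⟨h1, h2, h3⟩).elim⟩
  choose c hc using key
  set t : Finset ℝ := ((S ×ˢ S).filter (fun z => z.1 < z.2)).image (fun z => c z.1 z.2) with ht
  have htm : ∀ z ∈ t, ∃ a ∈ S, ∃ b ∈ S, a < b ∧ c a b = z := by
    intro z hz
    simp only [ht, Finset.mem_image, Finset.mem_filter, Finset.mem_product] at hz
    obtain ⟨⟨a, b⟩, ⟨⟨h1, h2⟩, h3⟩, h4⟩ := hz
    exact ⟨a, h1, b, h2, h3, h4⟩
  refine ⟨t \ S, ?_, ?_, Finset.sdiff_disjoint, ?_⟩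
  · intro z hz
    obtain ⟨a, ha, b, hb, hab, rfl⟩ := htm z (Finset.mem_sdiff.1 (Finset.mem_coe.1 hz)).1
    exact hH.ordConnected.out (hS ha) (hS hb) (Set.Ioo_subset_Icc_self (hc a b ha hb hab).1)
  · intro z hz
    obtain ⟨a, ha, b, hb, hab, rfl⟩ := htm z (Finset.mem_sdiff.1 hz).1
    exact (hc a b ha hb hab).2
  · apply Finset.card_le_sdiff_of_interleaved
    intro a ha b hb hab _
    refine ⟨c a b, ?_, (hc a b ha hb hab).1⟩
    simp only [ht, Finset.mem_image, Finset.mem_filter, Finset.mem_product]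
    exact ⟨(a, b), ⟨⟨ha, hb⟩, hab⟩, rfl⟩

theorem rolle_conf (p q : ℝ) (hpq : p < q) (H : Set ℝ) (hH : Convex ℝ H)
    (hHI : H ⊆ Set.Icc p q) (n k : ℕ) (x : ℝ) (hx : x ∈ H)
    (F : ℝ → ℝ) (hF : ContDiffOn ℝ (n + k + 1 : ℕ) F (Set.Icc p q))
    (S : Finset ℝ) (hS : ↑S ⊆ H) (hxS : x ∉ S) (hcard : S.card = n + 1)
    (hz : ∀ s ∈ S, F s = 0)
    (hzx : ∀ m ≤ k, iteratedDerivWithin m F (Set.Icc p q) x = 0) :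
    ∃ ξ ∈ H, iteratedDerivWithin (n + k + 1) F (Set.Icc p q) ξ = 0 := by
  have hcont : ∀ m ≤ n + k + 1, ContinuousOn (iteratedDerivWithin m F (Set.Icc p q))
      (Set.Icc p q) := fun m hm =>
    hF.continuousOn_iteratedDerivWithin (by exact_mod_cast hm) (uniqueDiffOn_Icc hpq)
  have step1 : ∀ m ≤ k, ∃ T : Finset ℝ, ↑T ⊆ H ∧ x ∉ T ∧ n + 1 ≤ T.card ∧
      ∀ s ∈ T, iteratedDerivWithin m F (Set.Icc p q) s = 0 := by
    intro m
    induction m with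
    | zero => intro _; exact ⟨S, hS, hxS, hcard.ge, by simpa using hz⟩
    | succ m ih =>
      intro hm
      obtain ⟨T, h1, h2, h3, h4⟩ := ih (by omega)
      obtain ⟨U, u1, u2, u3, u4⟩ := rolle_fin p q H hH hHI _ (hcont m (by omega)) (insert x T)
        (by rw [Finset.coe_insert]; exact Set.insert_subset hx h1)
        (by
          intro s hs
          rcases Finset.mem_insert.1 hs with rfl | hs
          · exact hzx m (by omega)
          · exact h4 s hs)
      refine ⟨U, u1, ?_, ?_, ?_⟩
      · exact fun h => Finset.disjoint_left.1 u3 h (Finset.mem_insert_self _ _)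
      · rw [Finset.card_insert_of_notMem h2] at u4; omega
      · intro s hs; rw [iteratedDerivWithin_succ]; exact u2 s hs
  have step2 : ∀ i ≤ n + 1, ∃ T : Finset ℝ, ↑T ⊆ H ∧ n + 2 ≤ T.card + i ∧
      ∀ s ∈ T, iteratedDerivWithin (k + i) F (Set.Icc p q) s = 0 := by
    intro i
    induction i with
    | zero =>
      intro _
      obtain ⟨T, h1, h2, h3, h4⟩ := step1 k le_rfl
      refine ⟨insert x T, by rw [Finset.coe_insert]; exact Set.insert_subset hx h1, ?_, ?_⟩
      · rw [Finset.card_insert_of_notMem h2]; omega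
      · intro s hs
        rcases Finset.mem_insert.1 hs with rfl | hs
        · exact hzx k le_rfl
        · exact h4 s hs
    | succ i ih =>
      intro hi
      obtain ⟨T, h1, h3, h4⟩ := ih (by omega)
      obtain ⟨U, u1, u2, u3, u4⟩ := rolle_fin p q H hH hHI _ (hcont (k + i) (by omega)) T h1 h4
      refine ⟨U, u1, by omega, ?_⟩
      intro s hs; rw [← add_assoc, iteratedDerivWithin_succ]; exact u2 s hs
  obtain ⟨T, h1, h2, h3⟩ := step2 (n + 1) le_rfl
  obtain ⟨s, hs⟩ := Finset.card_pos.1 (show 0 < T.card by omega)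
  refine ⟨s, h1 hs, ?_⟩
  rw [show n + k + 1 = k + (n + 1) by omega]
  exact h3 s hs

open Polynomial in
theorem itdw_poly (p q : ℝ) (hpq : p < q) (R : ℝ[X]) (m : ℕ) :
    ∀ y ∈ Set.Icc p q, iteratedDerivWithin m (fun t => R.eval t) (Set.Icc p q) y
      = (derivative^[m] R).eval y := by
  induction m with
  | zero => simp
  | succ m ih =>
    intro y hy
    rw [iteratedDerivWithin_succ, derivWithin_congr (fun z hz => ih z hz) (ih y hy),
      Polynomial.derivWithin _ (uniqueDiffOn_Icc hpq y hy), Function.iterate_succ_apply']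

open Polynomial in
theorem poly_top (R : ℝ[X]) (M : ℕ) (h : R.natDegree ≤ M) (y : ℝ) :
    (derivative^[M] R).eval y = (Nat.factorial M : ℝ) * R.coeff M := by
  have h0 : (derivative^[M] R).natDegree ≤ 0 := (natDegree_iterate_derivative R M).trans (by omega)
  rw [eq_C_of_natDegree_le_zero h0, eval_C, coeff_iterate_derivative]
  simp [Nat.descFactorial_self]

open Polynomial in
theorem poly_tay (c : ℕ → ℝ) (Q : ℝ[X]) (k : ℕ) (x : ℝ) (m : ℕ) (hm : m ≤ k) :
    (derivative^[m] (∑ s ∈ Finset.range (k + 1), C (c s) * (X - C x) ^ s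
      + (X - C x) ^ (k + 1) * Q)).eval x = (Nat.factorial m : ℝ) * c m := by
  rw [← factorial_smul_hasseDeriv]
  rw [LinearMap.smul_apply, eval_smul, nsmul_eq_mul, ← taylor_coeff]
  have : taylor x (∑ s ∈ Finset.range (k + 1), C (c s) * (X - C x) ^ s
      + (X - C x) ^ (k + 1) * Q) = ∑ s ∈ Finset.range (k + 1), C (c s) * X ^ s
      + X ^ (k + 1) * taylor x Q := by
    simp [map_sum, taylor_mul, taylor_pow]
  rw [this, coeff_add, finset_sum_coeff, coeff_X_pow_mul']
  simp only [coeff_C_mul_X_pow]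
  rw [Finset.sum_ite_eq, if_pos (by simp; omega), if_neg (by omega)]
  simp

open Polynomial in
theorem stmt_4_aux (p q : ℝ) (hpq : p < q) (n k : ℕ)
    (f : ℝ → ℝ) (hf : ContDiffOn ℝ (n + k + 1 : ℕ) f (Set.Icc p q))
    (x : ℝ) (X : ℕ → ℝ)
    (hx : x ∈ Set.Icc p q) (hX : ∀ i ≤ n, X i ∈ Set.Icc p q)
    (hxX : ∀ i ≤ n, X i ≠ x)
    (hXX : ∀ i j, i ≤ n → j ≤ n → i ≠ j → X i ≠ X j) :
    ∃ ξ ∈ convexHull ℝ (insert x (X '' Set.Iic n)),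
      (∑ r ∈ Finset.range (k + 1),
          iteratedDerivWithin (k - r) f (Set.Icc p q) x / (Nat.factorial (k - r) : ℝ)
            * neville X x (fun j => 1 / (X j - x) ^ r) n 0)
        = neville X x (fun j => f (X j) / (X j - x) ^ k) n 0
          + iteratedDerivWithin (n + k + 1) f (Set.Icc p q) ξ / (Nat.factorial (n + k + 1) : ℝ)
            * ∏ i ∈ Finset.range (n + 1), (x - X i) := by
  set c : ℕ → ℝ := fun s => iteratedDerivWithin s f (Set.Icc p q) x / (Nat.factorial s : ℝ) with hc
  have hP := fun r : ℕ => nev_poly X x (fun j => 1 / (X j - x) ^ r) n hXX n 0 (by omega)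
  choose Pr dr er vr using hP
  obtain ⟨Pf, df, ef, vf⟩ := nev_poly X x (fun j => f (X j) / (X j - x) ^ k) n hXX n 0 (by omega)
  set P : ℝ[X] := Pf - ∑ r ∈ Finset.range (k + 1), C (c (k - r)) * Pr r with hPdef
  have dP : P.natDegree ≤ n := by
    refine (natDegree_sub_le _ _).trans (max_le df ?_)
    exact natDegree_sum_le_of_forall_le _ _ fun r _ => (natDegree_C_mul_le _ _).trans (dr r)
  set W : ℝ[X] := ∏ i ∈ Finset.range (n + 1), (Polynomial.X - C (X i)) with hW
  have hWm : W.Monic := monic_prod_of_monic _ _ fun i _ => monic_X_sub_C _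
  have hWd : W.natDegree = n + 1 := by simp [hW, natDegree_prod_of_monic, monic_X_sub_C]
  have hWe : ∀ y, W.eval y = ∏ i ∈ Finset.range (n + 1), (y - X i) := by
    intro y; simp [hW, eval_prod]
  have hWx : W.eval x ≠ 0 := by
    rw [hWe]
    refine Finset.prod_ne_zero_iff.2 fun i hi => sub_ne_zero.2 ?_
    exact (hxX i (by simp at hi; omega)).symm
  set K : ℝ := -P.eval x / W.eval x with hK
  have hQ : ∃ Q, P + C K * W = (Polynomial.X - C x) * Q := by
    apply dvd_iff_isRoot.2
    simp only [IsRoot, eval_add, eval_mul, eval_C, hK]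
    field_simp
    ring
  obtain ⟨Q, hQ⟩ := hQ
  set T : ℝ[X] := ∑ s ∈ Finset.range (k + 1), C (c s) * (Polynomial.X - C x) ^ s with hT
  set R : ℝ[X] := T + (Polynomial.X - C x) ^ (k + 1) * Q with hR
  have hR' : R = T + ((Polynomial.X - C x) ^ k * P + C K * ((Polynomial.X - C x) ^ k * W)) := by
    rw [hR, pow_succ, mul_assoc, ← hQ]; ring
  have hTd : T.natDegree ≤ k := by
    refine natDegree_sum_le_of_forall_le _ _ fun s hs => (natDegree_C_mul_le _ _).trans ?_
    rw [natDegree_pow, natDegree_X_sub_C]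
    simp at hs; omega
  have hPd : ((Polynomial.X - C x) ^ k * P).natDegree ≤ n + k := by
    refine natDegree_mul_le.trans ?_
    rw [natDegree_pow, natDegree_X_sub_C]; omega
  have hkm : ((Polynomial.X - C x) ^ k * W).Monic := ((monic_X_sub_C x).pow k).mul hWm
  have hkd : ((Polynomial.X - C x) ^ k * W).natDegree = n + k + 1 := by
    rw [((monic_X_sub_C x).pow k).natDegree_mul hWm, natDegree_pow, natDegree_X_sub_C, hWd]; omega
  have hRd : R.natDegree ≤ n + k + 1 := by
    rw [hR']
    refine (natDegree_add_le _ _).trans (max_le (by omega) ?_)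
    refine (natDegree_add_le _ _).trans (max_le (by omega) ?_)
    exact (natDegree_C_mul_le _ _).trans hkd.le
  have hRc : R.coeff (n + k + 1) = K := by
    rw [hR', coeff_add, coeff_add, coeff_C_mul, coeff_eq_zero_of_natDegree_lt (by omega),
      coeff_eq_zero_of_natDegree_lt (by omega), ← hkd, hkm.coeff_natDegree]
    ring
  have hPe : P.eval x = neville X x (fun j => f (X j) / (X j - x) ^ k) n 0 -
      ∑ r ∈ Finset.range (k + 1), c (k - r) * neville X x (fun j => 1 / (X j - x) ^ r) n 0 := by
    simp [hPdef, eval_finsetSum, ef, er]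
  have hRX : ∀ i ≤ n, f (X i) - R.eval (X i) = 0 := by
    intro i hi
    have hne : X i - x ≠ 0 := sub_ne_zero.2 (hxX i hi)
    have hW0 : W.eval (X i) = 0 := by
      rw [hWe]; exact Finset.prod_eq_zero (Finset.mem_range.2 (by omega : i < n + 1)) (sub_self _)
    have hP0 : (X i - x) ^ k * P.eval (X i) = f (X i) - T.eval (X i) := by
      simp only [hPdef, hT, eval_sub, eval_finsetSum, eval_mul, eval_C, eval_pow, eval_X,
        vf i (by omega) (by omega), vr _ i (by omega) (by omega)]
      rw [← Finset.sum_range_reflect (fun s => c s * (X i - x) ^ s), mul_sub, Finset.mul_sum]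
      congr 1
      · field_simp
      · refine Finset.sum_congr rfl fun r hr => ?_
        have hr' : r ≤ k := by simp at hr; omega
        rw [show k + 1 - 1 - r = k - r by omega]
        have : (X i - x) ^ k = (X i - x) ^ (k - r) * (X i - x) ^ r := by
          rw [← pow_add]; congr 1; omega
        rw [this]; field_simp
    rw [hR']
    simp only [eval_add, eval_mul, eval_sub, eval_pow, eval_X, eval_C, hW0] at hP0 ⊢
    rw [hP0]; ring
  have hRcd : ContDiff ℝ (n + k + 1 : ℕ) (fun t => R.eval t) := by
    simpa using R.contDiff_aeval (𝕜 := ℝ) (n + k + 1 : ℕ)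
  have hder : ∀ m ≤ n + k + 1, ∀ y ∈ Set.Icc p q,
      iteratedDerivWithin m (fun t => f t - R.eval t) (Set.Icc p q) y
        = iteratedDerivWithin m f (Set.Icc p q) y - (derivative^[m] R).eval y := by
    intro m hm y hy
    change iteratedDerivWithin m (f - fun t => R.eval t) (Set.Icc p q) y = _
    rw [iteratedDerivWithin_sub hy (uniqueDiffOn_Icc hpq)
      ((hf y hy).of_le (by exact_mod_cast hm))
      (hRcd.contDiffWithinAt.of_le (by exact_mod_cast hm)), itdw_poly p q hpq R m y hy]
  have hHI : convexHull ℝ (insert x (X '' Set.Iic n)) ⊆ Set.Icc p q := by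
    refine convexHull_min ?_ (convex_Icc p q)
    rintro y (rfl | ⟨i, hi, rfl⟩)
    · exact hx
    · exact hX i hi
  obtain ⟨ξ, hξ, hξ0⟩ := rolle_conf p q hpq _ (convex_convexHull ℝ _) hHI n k x
    (subset_convexHull ℝ _ (Set.mem_insert _ _)) (fun t => f t - R.eval t)
    (hf.sub hRcd.contDiffOn) ((Finset.range (n + 1)).image X)
    (by
      intro y hy
      simp only [Finset.coe_image, Set.mem_image, Finset.coe_range, Set.mem_Iio] at hy
      obtain ⟨i, hi, rfl⟩ := hy
      exact subset_convexHull ℝ _ (Set.mem_insert_of_mem _ ⟨i, Set.mem_Iic.2 (by omega), rfl⟩))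
    (by
      intro h
      obtain ⟨i, hi, h⟩ := Finset.mem_image.1 h
      exact hxX i (by simp at hi; omega) h)
    (by
      rw [Finset.card_image_of_injOn, Finset.card_range]
      intro a ha b hb hab
      by_contra hne
      simp at ha hb
      exact hXX a b (by omega) (by omega) hne hab)
    (by
      intro s hs
      obtain ⟨i, hi, rfl⟩ := Finset.mem_image.1 hs
      exact hRX i (by simp at hi; omega))
    (by
      intro m hm
      rw [hder m (by omega) x hx, hR, hT, poly_tay c Q k x m hm, hc]
      have : (Nat.factorial m : ℝ) ≠ 0 := by positivity
      field_simp
      ring)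
  refine ⟨ξ, hξ, ?_⟩
  rw [hder _ le_rfl ξ (hHI hξ), poly_top R _ hRd, hRc, sub_eq_zero] at hξ0
  have hfac : (Nat.factorial (n + k + 1) : ℝ) ≠ 0 := by positivity
  rw [hξ0, mul_div_cancel_left₀ _ hfac, ← hWe, hK, div_mul_cancel₀ _ hWx, hPe]
  ring

theorem stmt_4 (p q : ℝ) (hpq : p < q) (n k : ℕ) (hn : 1 ≤ n)
    (f : ℝ → ℝ) (hf : ContDiffOn ℝ (n + k + 1 : ℕ) f (Set.Icc p q))
    (x : ℝ) (X : ℕ → ℝ)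
    (hx : x ∈ Set.Icc p q) (hX : ∀ i ≤ n, X i ∈ Set.Icc p q)
    (hxX : ∀ i ≤ n, X i ≠ x)
    (hXX : ∀ i j, i ≤ n → j ≤ n → i ≠ j → X i ≠ X j) :
    ∃ ξ ∈ convexHull ℝ (insert x (X '' Set.Iic n)),
      (∑ r ∈ Finset.range (k + 1),
          iteratedDerivWithin (k - r) f (Set.Icc p q) x / (Nat.factorial (k - r) : ℝ)
            * neville X x (fun j => 1 / (X j - x) ^ r) n 0)
        = neville X x (fun j => f (X j) / (X j - x) ^ k) n 0
          + iteratedDerivWithin (n + k + 1) f (Set.Icc p q) ξ / (Nat.factorial (n + k + 1) : ℝ)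
            * ∏ i ∈ Finset.range (n + 1), (x - X i) := by
  exact stmt_4_aux p q hpq n k f hf x X hx hX hxX hXX
end

section
/- Let p < q be reals, let n ≥ 1 and k ≥ 0 be integers, let f be (n+k+1)-times continuously differentiable on [p,q], and let x, x_0, …, x_n be pairwise distinct points of [p,q]. Then there exists ξ in the smallest closed interval containing x, x_0, …, x_n such that Σ_{r=0}^{k} (f^{(k−r)}(x)/(k−r)!)·A_r(x) = Ã^{(k)}_{0,1,…,n}[x] + (f^{(n+k+1)}(ξ)/(n+k+1)!)·∏_{i=0}^{n}(x − x_i). -/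
open Polynomial in
lemma aitken_eq_interp (X : ℕ → ℝ) (x : ℝ) (g : ℕ → ℝ) (n : ℕ)
    (hXX : ∀ i j, i ≤ n → j ≤ n → i ≠ j → X i ≠ X j) (i : ℕ) :
    ∀ j, i < j → j ≤ n → aitken X x g 0 i j =
      (Lagrange.interpolate (insert j (Finset.range (i + 1))) X g).eval x := by
  induction i with
  | zero =>
    intro j hij hj
    have h0 : X j - X 0 ≠ 0 := sub_ne_zero.2 (hXX j 0 hj (by omega) (by omega))
    have h0' : X 0 - X j ≠ 0 := sub_ne_zero.2 (hXX 0 j (by omega) hj (by omega))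
    have hinj : Set.InjOn X (insert j (Finset.range 1) : Finset ℕ) := by
      intro a ha b hb hab
      by_contra hne
      simp at ha hb
      exact hXX a b (by omega) (by omega) hne hab
    rw [aitken, dif_pos le_rfl,
      Lagrange.interpolate_eq_add_interpolate_erase g hinj (i := 0) (j := j) (by simp) (by simp)
        (by omega)]
    have e1 : (insert j (Finset.range (0 + 1))).erase j = {0} := by
      ext a; simp; omega
    have e2 : (insert j (Finset.range (0 + 1))).erase 0 = {j} := by
      ext a; simp; omega
    rw [e1, e2]
    simp [Lagrange.basisDivisor]
    field_simp
    grind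
  | succ i ih =>
    intro j hij hj
    have h0 : X j - X (i+1) ≠ 0 := sub_ne_zero.2 (hXX j (i+1) hj (by omega) (by omega))
    have h0' : X (i+1) - X j ≠ 0 := sub_ne_zero.2 (hXX (i+1) j (by omega) hj (by omega))
    have hinj : Set.InjOn X (insert j (Finset.range (i + 1 + 1)) : Finset ℕ) := by
      intro a ha b hb hab
      by_contra hne
      simp at ha hb
      exact hXX a b (by omega) (by omega) hne hab
    rw [aitken, dif_neg (by omega),
      Lagrange.interpolate_eq_add_interpolate_erase g hinj (i := i + 1) (j := j) (by simp) (by simp)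
        (by omega)]
    have e1 : (insert j (Finset.range (i + 1 + 1))).erase j
        = insert (i + 1) (Finset.range (i + 1)) := by
      ext a; simp; omega
    have e2 : (insert j (Finset.range (i + 1 + 1))).erase (i + 1)
        = insert j (Finset.range (i + 1)) := by
      ext a; simp; omega
    rw [e1, e2, Nat.add_sub_cancel, ih (i + 1) (by omega) (by omega), ih j (by omega) hj]
    simp only [Lagrange.basisDivisor, eval_add, eval_mul, eval_sub, eval_C, eval_X]
    field_simp
    grind

lemma rolle_step (p q : ℝ) (g g' : ℝ → ℝ)
    (hg : ∀ t ∈ Set.Icc p q, HasDerivWithinAt g (g' t) (Set.Icc p q) t)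
    (H : Set ℝ) (hH : H.OrdConnected) (hHs : H ⊆ Set.Icc p q) (S : Finset ℝ)
    (hS : ∀ s ∈ S, s ∈ H ∧ g s = 0) :
    ∃ S' : Finset ℝ, (∀ s ∈ S', s ∈ H ∧ g' s = 0 ∧ s ∉ S) ∧ S.card ≤ S'.card + 1 := by
  classical
  have key : ∀ a b : ℝ, ∃ c, a ∈ S → b ∈ S → a < b → (a < c ∧ c < b ∧ c ∈ H ∧ g' c = 0) := by
    intro a b
    by_cases h : a ∈ S ∧ b ∈ S ∧ a < b
    · obtain ⟨ha, hb, hab⟩ := h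
      have hsub : Set.Icc a b ⊆ H := hH.out (hS a ha).1 (hS b hb).1
      obtain ⟨c, hc, hc0⟩ := exists_hasDerivAt_eq_zero (f := g) (f' := g') hab
        (fun t ht => ((hg t (hHs (hsub ht))).continuousWithinAt).mono (hsub.trans hHs))
        (by rw [(hS a ha).2, (hS b hb).2])
        (fun t ht => (hg t (hHs (hsub (Set.Ioo_subset_Icc_self ht)))).hasDerivAt
          (Filter.mem_of_superset (Icc_mem_nhds ht.1 ht.2) (hsub.trans hHs)))
      exact ⟨c, fun _ _ _ => ⟨hc.1, hc.2, hsub (Set.Ioo_subset_Icc_self hc), hc0⟩⟩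
    · exact ⟨0, fun ha hb hab => (h ⟨ha, hb, hab⟩).elim⟩
  choose c hc using key
  let t : Finset ℝ := ((S ×ˢ S).filter (fun z => z.1 < z.2)).image (fun z => c z.1 z.2)
  refine ⟨t \ S, ?_, ?_⟩
  · intro s hs
    simp only [t, Finset.mem_sdiff, Finset.mem_image, Finset.mem_filter, Finset.mem_product] at hs
    obtain ⟨⟨z, ⟨⟨h1, h2⟩, h3⟩, rfl⟩, h4⟩ := hs
    have := hc z.1 z.2 h1 h2 h3
    exact ⟨this.2.2.1, this.2.2.2, h4⟩
  · apply Finset.card_le_sdiff_of_interleaved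
    intro a ha b hb hab _
    refine ⟨c a b, ?_, (hc a b ha hb hab).1, (hc a b ha hb hab).2.1⟩
    simp only [t, Finset.mem_image, Finset.mem_filter, Finset.mem_product]
    exact ⟨(a, b), ⟨⟨ha, hb⟩, hab⟩, rfl⟩

/-- Rolle with one zero `x` of multiplicity `k+1`. -/
lemma rolle_multi (p q : ℝ) (F : ℕ → ℝ → ℝ) (n k : ℕ)
    (hF : ∀ m < n + k + 1, ∀ t ∈ Set.Icc p q,
      HasDerivWithinAt (F m) (F (m + 1) t) (Set.Icc p q) t)
    (H : Set ℝ) (hH : H.OrdConnected) (hHs : H ⊆ Set.Icc p q) (x : ℝ) (hxH : x ∈ H)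
    (S : Finset ℝ) (hxS : x ∈ S) (hcard : S.card = n + 2)
    (hS : ∀ s ∈ S, s ∈ H ∧ F 0 s = 0) (hx : ∀ m ≤ k, F m x = 0) :
    ∃ ξ ∈ H, F (n + k + 1) ξ = 0 := by
  classical
  have A : ∀ m ≤ k, ∃ S : Finset ℝ, x ∈ S ∧ n + 2 ≤ S.card ∧ ∀ s ∈ S, s ∈ H ∧ F m s = 0 := by
    intro m
    induction m with
    | zero => intro _; exact ⟨S, hxS, hcard.ge, hS⟩
    | succ m ih =>
      intro hm
      obtain ⟨S, h1, h2, h3⟩ := ih (by omega)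
      obtain ⟨S', h4, h5⟩ := rolle_step p q (F m) (F (m + 1)) (hF m (by omega)) H hH hHs S h3
      refine ⟨insert x S', by simp, ?_, ?_⟩
      · rw [Finset.card_insert_of_notMem (fun h => (h4 x h).2.2 h1)]
        omega
      · intro s hs
        rcases Finset.mem_insert.1 hs with rfl | hs
        · exact ⟨hxH, hx _ hm⟩
        · exact ⟨(h4 s hs).1, (h4 s hs).2.1⟩
  have B : ∀ d ≤ n + 1, ∃ S : Finset ℝ, n + 2 ≤ S.card + d ∧ ∀ s ∈ S, s ∈ H ∧ F (k + d) s = 0 := by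
    intro d
    induction d with
    | zero =>
      intro _
      obtain ⟨S, _, h2, h3⟩ := A k le_rfl
      exact ⟨S, h2, h3⟩
    | succ d ih =>
      intro hd
      obtain ⟨S, h2, h3⟩ := ih (by omega)
      obtain ⟨S', h4, h5⟩ :=
        rolle_step p q (F (k + d)) (F (k + d + 1)) (hF _ (by omega)) H hH hHs S h3
      exact ⟨S', by omega, fun s hs => ⟨(h4 s hs).1, (h4 s hs).2.1⟩⟩
  obtain ⟨S, h1, h2⟩ := B (n + 1) le_rfl
  obtain ⟨ξ, hξ⟩ : S.Nonempty := Finset.card_pos.1 (by omega)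
  refine ⟨ξ, (h2 ξ hξ).1, ?_⟩
  have := (h2 ξ hξ).2
  rwa [show k + (n + 1) = n + k + 1 by omega] at this

theorem stmt_5 (p q : ℝ) (hpq : p < q) (n k : ℕ) (hn : 1 ≤ n)
    (f : ℝ → ℝ) (hf : ContDiffOn ℝ (n + k + 1 : ℕ) f (Set.Icc p q))
    (x : ℝ) (X : ℕ → ℝ)
    (hx : x ∈ Set.Icc p q) (hX : ∀ i ≤ n, X i ∈ Set.Icc p q)
    (hxX : ∀ i ≤ n, X i ≠ x)
    (hXX : ∀ i j, i ≤ n → j ≤ n → i ≠ j → X i ≠ X j) :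
    ∃ ξ ∈ convexHull ℝ (insert x (X '' Set.Iic n)),
      (∑ r ∈ Finset.range (k + 1),
          iteratedDerivWithin (k - r) f (Set.Icc p q) x / (Nat.factorial (k - r) : ℝ)
            * aitken X x (fun j => 1 / (X j - x) ^ r) 0 (n - 1) n)
        = aitken X x (fun j => f (X j) / (X j - x) ^ k) 0 (n - 1) n
          + iteratedDerivWithin (n + k + 1) f (Set.Icc p q) ξ / (Nat.factorial (n + k + 1) : ℝ)
            * ∏ i ∈ Finset.range (n + 1), (x - X i) := by
  classical
  set I := Set.Icc p q with hI
  have hU : UniqueDiffOn ℝ I := uniqueDiffOn_Icc hpq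
  set N := n + k + 1 with hN
  set s := Finset.range (n + 1) with hs
  have hinj : Set.InjOn X s := by
    intro a ha b hb hab
    by_contra hne
    simp [hs] at ha hb
    exact hXX a b (by omega) (by omega) hne hab
  have hcs : s.card = n + 1 := by simp [hs]
  have hait : ∀ g, aitken X x g 0 (n - 1) n = (Lagrange.interpolate s X g).eval x := by
    intro g
    rw [aitken_eq_interp X x g n hXX (n - 1) n (by omega) le_rfl]
    congr 3
    ext a; simp [hs]; omega
  let c : ℕ → ℝ := fun m => iteratedDerivWithin m f I x / (Nat.factorial m : ℝ)
  let T : Polynomial ℝ := ∑ m ∈ Finset.range (k + 1),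
    Polynomial.C (c m) * (Polynomial.X - Polynomial.C x) ^ m
  let h : ℕ → ℝ := fun j => (f (X j) - T.eval (X j)) / (X j - x) ^ (k + 1)
  let Q := Lagrange.interpolate s X h
  have hQdeg : Q.natDegree ≤ n := by
    apply Polynomial.natDegree_le_of_degree_le
    have := Lagrange.degree_interpolate_le h hinj
    rwa [hcs, Nat.add_sub_cancel] at this
  have hQev : ∀ j ≤ n, Q.eval (X j) = h j := fun j hj =>
    Lagrange.eval_interpolate_at_node h hinj (by simp [hs]; omega)
  let P := T + (Polynomial.X - Polynomial.C x) ^ (k + 1) * Q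
  have hTdeg : T.natDegree ≤ k := by
    apply Polynomial.natDegree_sum_le_of_forall_le
    intro m hm
    have : m ≤ k := by simpa [Nat.lt_succ_iff] using hm
    refine (Polynomial.natDegree_C_mul_le _ _).trans ?_
    rw [Polynomial.natDegree_pow, Polynomial.natDegree_X_sub_C]
    omega
  have hpd : ((Polynomial.X - Polynomial.C x : Polynomial ℝ) ^ (k + 1)).natDegree = k + 1 := by
    rw [Polynomial.natDegree_pow, Polynomial.natDegree_X_sub_C, mul_one]
  have hPdeg : P.natDegree ≤ N := by
    apply Polynomial.natDegree_add_le_of_degree_le (by omega)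
    refine Polynomial.natDegree_mul_le.trans ?_
    omega
  have hPcoeff : P.coeff N = Q.coeff n := by
    have h1 : T.coeff N = 0 := Polynomial.coeff_eq_zero_of_natDegree_lt (by omega)
    have h2 := Polynomial.coeff_mul_add_eq_of_natDegree_le hpd.le hQdeg
    have h3 : ((Polynomial.X - Polynomial.C x : Polynomial ℝ) ^ (k + 1)).coeff (k + 1) = 1 := by
      have := ((Polynomial.monic_X_sub_C x).pow (k + 1)).coeff_natDegree
      rwa [hpd] at this
    rw [h3, one_mul, show k + 1 + n = N by omega] at h2
    simp only [P, Polynomial.coeff_add, h1, h2, zero_add]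
  have hPx : ∀ m ≤ k, (Polynomial.derivative^[m] P).eval x = iteratedDerivWithin m f I x := by
    intro m hm
    have h1 : Polynomial.taylor x P = ∑ m ∈ Finset.range (k + 1),
        Polynomial.C (c m) * Polynomial.X ^ m
        + Polynomial.X ^ (k + 1) * Polynomial.taylor x Q := by
      simp [P, T, Polynomial.taylor_mul, Polynomial.taylor_pow]
    have h2 : (Polynomial.taylor x P).coeff m = c m := by
      rw [h1, Polynomial.coeff_add, Polynomial.coeff_X_pow_mul', if_neg (by omega),
        Polynomial.finsetSum_coeff]
      simp only [Polynomial.coeff_C_mul_X_pow]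
      simp
      omega
    rw [Polynomial.taylor_coeff] at h2
    have h3 : Polynomial.derivative^[m] P = (Nat.factorial m) • Polynomial.hasseDeriv m P := by
      rw [← Polynomial.factorial_smul_hasseDeriv]; rfl
    rw [h3, Polynomial.eval_smul, h2, nsmul_eq_mul]
    simp only [c]
    field_simp
  have hPX : ∀ j ≤ n, P.eval (X j) = f (X j) := by
    intro j hj
    have : X j - x ≠ 0 := sub_ne_zero.2 (hxX j hj)
    simp only [P, Polynomial.eval_add, Polynomial.eval_mul, hQev j hj, h, Polynomial.eval_pow,
      Polynomial.eval_sub, Polynomial.eval_X, Polynomial.eval_C]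
    field_simp
    ring
  have hPN : ∀ t, (Polynomial.derivative^[N] P).eval t = (Nat.factorial N : ℝ) * Q.coeff n := by
    intro t
    have h1 : (Polynomial.derivative^[N] P).natDegree ≤ 0 :=
      (Polynomial.natDegree_iterate_derivative P N).trans (by omega)
    rw [Polynomial.eq_C_of_natDegree_le_zero h1, Polynomial.eval_C,
      Polynomial.coeff_iterate_derivative]
    simp [hPcoeff, Nat.descFactorial_self]
  set H := convexHull ℝ (insert x (X '' Set.Iic n)) with hH
  have hHI : H ⊆ I := by
    apply convexHull_min _ (convex_Icc p q)
    rintro y (rfl | ⟨j, hj, rfl⟩)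
    · exact hx
    · exact hX j hj
  have hxH : x ∈ H := subset_convexHull ℝ _ (by simp)
  have hXH : ∀ j ≤ n, X j ∈ H := fun j hj =>
    subset_convexHull ℝ _ (Set.mem_insert_of_mem _ ⟨j, hj, rfl⟩)
  obtain ⟨ξ, hξ, hξ0⟩ := rolle_multi p q
    (fun m t => iteratedDerivWithin m f I t - (Polynomial.derivative^[m] P).eval t) n k
    (by
      intro m hm t ht
      have hd := (hf.differentiableOn_iteratedDerivWithin (m := m) (by exact_mod_cast hm) hU) t ht
      have h1 := hd.hasDerivWithinAt
      rw [← iteratedDerivWithin_succ] at h1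
      have h2 := ((Polynomial.derivative^[m] P).hasDerivAt t).hasDerivWithinAt (s := I)
      rw [← Function.iterate_succ_apply' (⇑Polynomial.derivative)] at h2
      exact h1.sub h2)
    H (convex_convexHull ℝ _).ordConnected hHI x hxH (insert x (s.image X)) (by simp)
    (by
      rw [Finset.card_insert_of_notMem, Finset.card_image_of_injOn hinj, hcs]
      intro hmem
      obtain ⟨j, hj, hj'⟩ := Finset.mem_image.1 hmem
      exact hxX j (by simp [hs] at hj; omega) hj')
    (by
      intro y hy
      rcases Finset.mem_insert.1 hy with rfl | hy
      · refine ⟨hxH, ?_⟩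
        have := hPx 0 (by omega)
        rw [this, sub_self]
      · obtain ⟨j, hj, rfl⟩ := Finset.mem_image.1 hy
        have hj' : j ≤ n := by simp [hs] at hj; omega
        refine ⟨hXH j hj', ?_⟩
        simp [hPX j hj'])
    (by
      intro m hm
      simp only [hPx m hm, sub_self])
  refine ⟨ξ, hξ, ?_⟩
  have hcoef : iteratedDerivWithin N f I ξ / (Nat.factorial N : ℝ) = Q.coeff n := by
    have h1 : iteratedDerivWithin N f I ξ = (Nat.factorial N : ℝ) * Q.coeff n := by
      rw [← hPN ξ]; exact sub_eq_zero.1 hξ0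
    rw [h1]
    field_simp
  rw [hcoef, ← Lagrange.eval_nodal]
  simp only [hait]
  -- the interpolant of `(X j - x) * h j`
  let R := (Polynomial.X - Polynomial.C x) * Q - Polynomial.C (Q.coeff n) * Lagrange.nodal s X
  have hnd : (Lagrange.nodal s X).natDegree = n + 1 := by rw [Lagrange.natDegree_nodal, hcs]
  have hRdeg : R.degree < (s.card : WithBot ℕ) := by
    rw [hcs, Polynomial.degree_lt_iff_coeff_zero]
    intro m hm
    rcases hm.eq_or_lt with rfl | hm
    · have h1 : (Lagrange.nodal s X).coeff (n + 1) = 1 := by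
        have := (Lagrange.nodal_monic (s := s) (v := X)).coeff_natDegree
        rwa [hnd] at this
      have h2 := Polynomial.coeff_mul_add_eq_of_natDegree_le
        (Polynomial.natDegree_X_sub_C_le x) hQdeg
      rw [add_comm 1 n] at h2
      simp [R, h1, h2, Polynomial.coeff_X, Polynomial.coeff_C]
    · apply Polynomial.coeff_eq_zero_of_natDegree_lt
      refine lt_of_le_of_lt ?_ hm
      refine (Polynomial.natDegree_sub_le _ _).trans (max_le ?_ ?_)
      · refine Polynomial.natDegree_mul_le.trans ?_
        rw [Polynomial.natDegree_X_sub_C]; omega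
      · exact (Polynomial.natDegree_C_mul_le _ _).trans hnd.le
  have hR : R = Lagrange.interpolate s X (fun j => (X j - x) * h j) := by
    apply Lagrange.eq_interpolate_of_eval_eq _ hinj hRdeg
    intro j hj
    have hj' : j ≤ n := by simp [hs] at hj; omega
    simp [R, hQev j hj', Lagrange.eval_nodal_at_node hj]
  have hlin : (∑ r ∈ Finset.range (k + 1), Polynomial.C (c (k - r)) *
      Lagrange.interpolate s X (fun j => 1 / (X j - x) ^ r))
      = Lagrange.interpolate s X (fun j => f (X j) / (X j - x) ^ k) - R := by
    rw [hR, ← map_sub]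
    simp only [← Polynomial.smul_eq_C_mul, ← map_smul, ← map_sum]
    apply Lagrange.interpolate_eq_of_values_eq_on
    intro j hj
    have hj' : j ≤ n := by simp [hs] at hj; omega
    have hne : X j - x ≠ 0 := sub_ne_zero.2 (hxX j hj')
    have hT : T.eval (X j) = ∑ r ∈ Finset.range (k + 1), c (k - r) * (X j - x) ^ (k - r) := by
      have := Finset.sum_range_reflect (fun m => c m * (X j - x) ^ m) (k + 1)
      simp only [Nat.add_sub_cancel] at this
      simp only [T, Polynomial.eval_finsetSum]
      simp
      exact this.symm
    have e1 : (X j - x) * h j = f (X j) / (X j - x) ^ k - T.eval (X j) / (X j - x) ^ k := by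
      simp only [h]
      field_simp
      ring
    simp only [Finset.sum_apply, Pi.smul_apply, Pi.sub_apply, smul_eq_mul]
    rw [e1, sub_sub_cancel, hT, Finset.sum_div]
    apply Finset.sum_congr rfl
    intro r hr
    have hr' : r ≤ k := by simp at hr; omega
    have : (X j - x) ^ k = (X j - x) ^ (k - r) * (X j - x) ^ r := by
      rw [← pow_add]; congr 1; omega
    rw [this]
    field_simp
  have hfin := congrArg (Polynomial.eval x) hlin
  simp only [Polynomial.eval_finsetSum, Polynomial.eval_mul, Polynomial.eval_C,
    Polynomial.eval_sub] at hfin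
  have hRx : R.eval x = - (Q.coeff n * (Lagrange.nodal s X).eval x) := by
    simp [R]
  rw [hRx, sub_neg_eq_add] at hfin
  exact hfin
end

section
/- Let p < q be reals, let n ≥ 1 and t ≥ 0 be integers, let f be (n+t+1)-times continuously differentiable on [p,q], and let x, x_0, …, x_n be pairwise distinct points of [p,q]. Define coefficients a_0 = 1 and a_k = −(a_0·N_k(x) + a_1·N_{k−1}(x) + … + a_{k−1}·N_1(x)) for k = 1, …, t. Then there exist points ξ_0, ξ_1, …, ξ_t in the smallest closed interval containing x, x_0, …, x_n such that f^{(t)}(x)/t! = Σ_{j=0}^{t} a_j·Ñ^{(t−j)}_{0,1,…,n}[x] + ∏_{i=0}^{n}(x − x_i) · Σ_{j=0}^{t} a_j·f^{(t+n+1−j)}(ξ_j)/(t+n+1−j)!. -/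
open Polynomial in
theorem aux_neville_eval (X : ℕ → ℝ) (x : ℝ) (g : ℕ → ℝ) (n : ℕ)
    (hXX : ∀ i j, i ≤ n → j ≤ n → i ≠ j → X i ≠ X j) :
    ∀ i j, i + j ≤ n → neville X x g i j
      = eval x (Lagrange.interpolate (Finset.Icc j (i + j)) X g) := by
  intro i
  induction i with
  | zero =>
    intro j _
    simp [neville]
  | succ i ih =>
    intro j hj
    have hne : X (i + 1 + j) ≠ X j := hXX _ _ hj (by omega) (by omega)
    have hinj : Set.InjOn X (Finset.Icc j (i + 1 + j) : Finset ℕ) := by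
      intro a ha b hb hab
      simp only [Finset.coe_Icc, Set.mem_Icc] at ha hb
      by_contra h
      exact hXX a b (by omega) (by omega) h hab
    rw [Lagrange.interpolate_eq_add_interpolate_erase g hinj (i := j) (j := i + 1 + j)
      (by simp) (by simp) (by omega)]
    have e1 : (Finset.Icc j (i + 1 + j)).erase (i + 1 + j) = Finset.Icc j (i + j) := by
      ext a; simp only [Finset.mem_erase, Finset.mem_Icc]; omega
    have e2 : (Finset.Icc j (i + 1 + j)).erase j = Finset.Icc (j + 1) (i + (j + 1)) := by
      ext a; simp only [Finset.mem_erase, Finset.mem_Icc]; omega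
    rw [e1, e2, neville, ih j (by omega), ih (j + 1) (by omega)]
    simp only [eval_add, eval_mul, Lagrange.basisDivisor, eval_C, eval_sub, eval_X]
    have h1 : X (i + 1 + j) - X j ≠ 0 := sub_ne_zero.2 hne
    have h2 : X j - X (i + 1 + j) ≠ 0 := sub_ne_zero.2 hne.symm
    have h3 : (X j - X (i + 1 + j))⁻¹ = -(X (i + 1 + j) - X j)⁻¹ := by
      rw [← inv_neg, neg_sub]
    rw [h3, div_eq_mul_inv]
    ring

theorem aux_neville_sum (X : ℕ → ℝ) (x : ℝ) (g : ℕ → ℝ) (n : ℕ)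
    (hXX : ∀ i j, i ≤ n → j ≤ n → i ≠ j → X i ≠ X j) (hxX : ∀ i ≤ n, X i ≠ x) :
    neville X x g n 0 = (∏ i ∈ Finset.range (n + 1), (x - X i)) *
      ∑ i ∈ Finset.range (n + 1), g i / (x - X i) /
        ∏ j ∈ (Finset.range (n + 1)).erase i, (X i - X j) := by
  rw [aux_neville_eval X x g n hXX n 0 le_rfl]
  have e : Finset.Icc 0 (n + 0) = Finset.range (n + 1) := by
    ext a; simp only [Finset.mem_Icc, Finset.mem_range]; omega
  rw [e, Lagrange.eval_interpolate_not_at_node, Lagrange.eval_nodal]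
  · congr 1
    refine Finset.sum_congr rfl fun i _ => ?_
    rw [Lagrange.nodalWeight, Finset.prod_inv_distrib]
    ring
  · intro i hi
    exact (hxX i (by simpa [Nat.lt_succ_iff] using hi)).symm

theorem aux_neville_one (X : ℕ → ℝ) (x : ℝ) (n : ℕ)
    (hXX : ∀ i j, i ≤ n → j ≤ n → i ≠ j → X i ≠ X j) :
    neville X x (fun _ => 1) n 0 = 1 := by
  rw [aux_neville_eval X x _ n hXX n 0 le_rfl]
  have := Lagrange.interpolate_one (s := Finset.Icc 0 (n + 0)) (v := X) (by
      intro a ha b hb hab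
      simp only [Finset.coe_Icc, Set.mem_Icc] at ha hb
      by_contra h
      exact hXX a b (by omega) (by omega) h hab) (by simp)
  have e : (fun _ : ℕ => (1:ℝ)) = 1 := rfl
  rw [e, this]; simp

/-- One Rolle step. -/
theorem aux_rolle_s6 (p q : ℝ) (g : ℝ → ℝ) (hg : ContinuousOn g (Set.Icc p q)) (C : Set ℝ)
    (hC : C.OrdConnected) (hCI : C ⊆ Set.Icc p q) (k : ℕ) (S : Finset ℝ) (hS : S.card = k + 1)
    (hSC : ∀ y ∈ S, y ∈ C) (h0 : ∀ y ∈ S, g y = 0) :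
    ∃ S' : Finset ℝ, S'.card = k ∧ (∀ y ∈ S', y ∈ C) ∧ (∀ y ∈ S', y ∉ S) ∧
      ∀ y ∈ S', derivWithin g (Set.Icc p q) y = 0 := by
  classical
  let s := S.orderEmbOfFin hS
  have hmem : ∀ i, s i ∈ S := fun i => Finset.orderEmbOfFin_mem S hS i
  have key : ∀ i : Fin k, ∃ c ∈ Set.Ioo (s i.castSucc) (s i.succ), deriv g c = 0 := by
    intro i
    have hlt : s i.castSucc < s i.succ := s.strictMono (Fin.castSucc_lt_succ)
    apply exists_deriv_eq_zero hlt
    · exact hg.mono ((hC.out (hSC _ (hmem _)) (hSC _ (hmem _))).trans hCI)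
    · rw [h0 _ (hmem _), h0 _ (hmem _)]
  choose c hc hd using key
  have hcm : StrictMono c := by
    intro i j hij
    have : s i.succ ≤ s j.castSucc := s.monotone (by
      rw [Fin.le_def]; simp; exact hij)
    exact (hc i).2.trans_le (this.trans (hc j).1.le)
  refine ⟨Finset.univ.image c, ?_, ?_, ?_, ?_⟩
  · rw [Finset.card_image_of_injective _ hcm.injective]; simp
  · intro y hy
    obtain ⟨i, -, rfl⟩ := Finset.mem_image.1 hy
    exact hC.out (hSC _ (hmem _)) (hSC _ (hmem _)) (Set.Ioo_subset_Icc_self (hc i))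
  · intro y hy hyS
    obtain ⟨i, -, rfl⟩ := Finset.mem_image.1 hy
    have : c i ∈ Set.range s := by
      rw [Finset.range_orderEmbOfFin]; exact hyS
    obtain ⟨j, hj⟩ := this
    have h1 := (hc i).1
    have h2 := (hc i).2
    rw [← hj] at h1 h2
    have h1 := s.lt_iff_lt.1 h1
    have h2 := s.lt_iff_lt.1 h2
    rw [Fin.lt_def] at h1 h2
    simp at h1 h2
    omega
  · intro y hy
    obtain ⟨i, -, rfl⟩ := Finset.mem_image.1 hy
    rw [derivWithin_of_mem_nhds, hd]
    have h1 := (hCI (hSC _ (hmem i.castSucc))).1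
    have h2 := (hCI (hSC _ (hmem i.succ))).2
    exact Icc_mem_nhds (h1.trans_lt (hc i).1) ((hc i).2.trans_le h2)

theorem aux_rolle_multi (p q : ℝ) (hpq : p < q) (g : ℝ → ℝ) (C : Set ℝ)
    (hC : C.OrdConnected) (hCI : C ⊆ Set.Icc p q) (r n : ℕ)
    (hg : ContDiffOn ℝ (n + r + 1 : ℕ) g (Set.Icc p q))
    (x : ℝ) (hx : x ∈ C) (S : Finset ℝ) (hS : S.card = n + 1)
    (hSC : ∀ y ∈ S, y ∈ C) (hxS : x ∉ S) (h0 : ∀ y ∈ S, g y = 0)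
    (hx0 : ∀ m ≤ r, iteratedDerivWithin m g (Set.Icc p q) x = 0) :
    ∃ ξ ∈ C, iteratedDerivWithin (n + r + 1) g (Set.Icc p q) ξ = 0 := by
  classical
  have hcont : ∀ m ≤ n + r + 1, ContinuousOn (iteratedDerivWithin m g (Set.Icc p q)) (Set.Icc p q) :=
    fun m hm => hg.continuousOn_iteratedDerivWithin (by exact_mod_cast hm) (uniqueDiffOn_Icc hpq)
  have A : ∀ m ≤ r + 1, ∃ S : Finset ℝ, S.card = n + 1 ∧ (∀ y ∈ S, y ∈ C) ∧ (x ∉ S) ∧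
      ∀ y ∈ S, iteratedDerivWithin m g (Set.Icc p q) y = 0 := by
    intro m
    induction m with
    | zero => intro _; exact ⟨S, hS, hSC, hxS, by simpa using h0⟩
    | succ m ih =>
      intro hm
      obtain ⟨T, hT, hTC, hxT, hT0⟩ := ih (by omega)
      obtain ⟨S', h1, h2, h3, h4⟩ := aux_rolle_s6 p q _ (hcont m (by omega)) C hC hCI (n + 1)
        (insert x T) (by rw [Finset.card_insert_of_notMem hxT, hT])
        (by intro y hy; rcases Finset.mem_insert.1 hy with rfl | hy; exacts [hx, hTC y hy])
        (by intro y hy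
            rcases Finset.mem_insert.1 hy with rfl | hy
            exacts [hx0 m (by omega), hT0 y hy])
      refine ⟨S', h1, h2, fun h => h3 x h (Finset.mem_insert_self _ _), fun y hy => ?_⟩
      rw [iteratedDerivWithin_succ]; exact h4 y hy
  have B : ∀ m ≤ n, ∃ S : Finset ℝ, S.card = n - m + 1 ∧ (∀ y ∈ S, y ∈ C) ∧
      ∀ y ∈ S, iteratedDerivWithin (m + r + 1) g (Set.Icc p q) y = 0 := by
    intro m
    induction m with
    | zero =>
      intro _
      obtain ⟨T, hT, hTC, hxT, hT0⟩ := A (r + 1) le_rfl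
      exact ⟨T, hT, hTC, by simpa using hT0⟩
    | succ m ih =>
      intro hm
      obtain ⟨T, hT, hTC, hT0⟩ := ih (by omega)
      obtain ⟨S', h1, h2, h3, h4⟩ := aux_rolle_s6 p q _ (hcont (m + r + 1) (by omega)) C hC hCI
        (n - m) T hT hTC hT0
      refine ⟨S', by omega, h2, fun y hy => ?_⟩
      rw [show m + 1 + r + 1 = (m + r + 1) + 1 by ring, iteratedDerivWithin_succ]; exact h4 y hy
  obtain ⟨T, hT, hTC, hT0⟩ := B n le_rfl
  obtain ⟨y, hy⟩ : T.Nonempty := by rw [← Finset.card_pos]; omega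
  exact ⟨y, hTC y hy, hT0 y hy⟩

open Polynomial in
theorem aux_poly_deriv (H : ℝ[X]) (k : ℕ) :
    iteratedDeriv k (fun y => H.eval y) = fun y => (derivative^[k] H).eval y := by
  induction k generalizing H with
  | zero => simp
  | succ k ih =>
    rw [iteratedDeriv_succ', Function.iterate_succ_apply, ← ih]
    congr 1
    ext y
    simp

open Polynomial in
theorem aux_cd {k : WithTop ℕ∞} (H : ℝ[X]) : ContDiff ℝ k (fun y => H.eval y) := by
  simpa using H.contDiff_aeval (𝕜 := ℝ) (n := k)

open Polynomial in
theorem aux_poly_derivWithin (p q : ℝ) (hpq : p < q) (H : ℝ[X]) (k : ℕ) (y : ℝ)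
    (hy : y ∈ Set.Icc p q) :
    iteratedDerivWithin k (fun y => H.eval y) (Set.Icc p q) y = (derivative^[k] H).eval y := by
  rw [iteratedDerivWithin_eq_iteratedDeriv (uniqueDiffOn_Icc hpq) _ hy, aux_poly_deriv]
  exact (aux_cd H).contDiffAt

open Polynomial in
theorem aux_key (p q : ℝ) (hpq : p < q) (n r : ℕ)
    (f : ℝ → ℝ) (hf : ContDiffOn ℝ (n + r + 1 : ℕ) f (Set.Icc p q))
    (x : ℝ) (X : ℕ → ℝ)
    (hx : x ∈ Set.Icc p q) (hX : ∀ i ≤ n, X i ∈ Set.Icc p q)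
    (hxX : ∀ i ≤ n, X i ≠ x)
    (hXX : ∀ i j, i ≤ n → j ≤ n → i ≠ j → X i ≠ X j) :
    ∃ ξ ∈ convexHull ℝ (insert x (X '' Set.Iic n)),
      neville X x (fun i => f (X i) / (X i - x) ^ r) n 0 =
      (∑ m ∈ Finset.range (r + 1), iteratedDerivWithin m f (Set.Icc p q) x / (Nat.factorial m : ℝ)
        * neville X x (fun i => 1 / (X i - x) ^ (r - m)) n 0)
      - (∏ i ∈ Finset.range (n + 1), (x - X i)) *
        (iteratedDerivWithin (n + r + 1) f (Set.Icc p q) ξ / (Nat.factorial (n + r + 1) : ℝ)) := by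
  classical
  set I := Set.Icc p q with hI
  set c : ℕ → ℝ := fun m => iteratedDerivWithin m f I x / (Nat.factorial m : ℝ) with hc
  let T : ℝ[X] := ∑ m ∈ Finset.range (r + 1), C (c m) * (Polynomial.X - C x) ^ m
  let W : ℕ → ℝ := fun i => (f (X i) - T.eval (X i)) / (X i - x) ^ (r + 1)
  let Q : ℝ[X] := Lagrange.interpolate (Finset.range (n + 1)) X W
  let H : ℝ[X] := T + Q * (Polynomial.X - C x) ^ (r + 1)
  have hinj : Set.InjOn X (Finset.range (n + 1) : Finset ℕ) := by
    intro a ha b hb hab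
    simp only [Finset.coe_range, Set.mem_Iio] at ha hb
    by_contra h
    exact hXX a b (by omega) (by omega) h hab
  have hTeval : ∀ y, T.eval y = ∑ m ∈ Finset.range (r + 1), c m * (y - x) ^ m := by
    intro y; simp [T, eval_finsetSum]
  have hQnode : ∀ i ≤ n, Q.eval (X i) = W i := fun i hi =>
    Lagrange.eval_interpolate_at_node W hinj (by simp; omega)
  have hQdeg : Q.degree < (Finset.range (n + 1)).card := Lagrange.degree_interpolate_lt W hinj
  have hHnode : ∀ i ≤ n, H.eval (X i) = f (X i) := by
    intro i hi
    have : X i - x ≠ 0 := sub_ne_zero.2 (hxX i hi)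
    simp only [H, eval_add, eval_mul, hQnode i hi, W, eval_pow, eval_sub, eval_X, eval_C]
    field_simp
    ring
  -- leading coefficient
  have hK : Q.coeff n = ∑ i ∈ Finset.range (n + 1), W i /
      ∏ j ∈ (Finset.range (n + 1)).erase i, (X i - X j) := by
    have := Lagrange.coeff_eq_sum hinj hQdeg
    simp only [Finset.card_range, Nat.add_sub_cancel] at this
    rw [this]
    refine Finset.sum_congr rfl fun i hi => ?_
    rw [hQnode i (by simpa [Nat.lt_succ_iff] using hi)]
  have hQn : Q.natDegree ≤ n := by
    rw [Finset.card_range] at hQdeg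
    by_cases hQ0 : Q = 0
    · simp [hQ0]
    · have := (natDegree_lt_iff_degree_lt hQ0).2 hQdeg
      omega
  have hTn : T.natDegree ≤ r := by
    apply natDegree_sum_le_of_forall_le
    intro m hm
    have hm' : m ≤ r := by simpa [Nat.lt_succ_iff] using hm
    refine (natDegree_C_mul_le _ _).trans ?_
    simpa using hm'
  have hmon : ((Polynomial.X - C x : ℝ[X]) ^ (r + 1)).natDegree = r + 1 := by
    simp
  have hHn : H.natDegree ≤ n + r + 1 := by
    refine (natDegree_add_le _ _).trans (max_le (by omega) ?_)
    refine natDegree_mul_le.trans ?_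
    rw [hmon]; omega
  have hHc : H.coeff (n + r + 1) = Q.coeff n := by
    simp only [H, coeff_add]
    rw [coeff_eq_zero_of_natDegree_lt (show T.natDegree < n + r + 1 by omega), zero_add,
      add_assoc, coeff_mul_add_eq_of_natDegree_le hQn hmon.le]
    have : ((Polynomial.X - C x : ℝ[X]) ^ (r + 1)).coeff (r + 1) = 1 := by
      have := ((monic_X_sub_C x).pow (r + 1)).coeff_natDegree
      rwa [hmon] at this
    rw [this, mul_one]
  have hHtop : ∀ y, (derivative^[n + r + 1] H).eval y = (Nat.factorial (n + r + 1) : ℝ) * Q.coeff n := by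
    intro y
    have h1 : (derivative^[n + r + 1] H).natDegree ≤ 0 := by
      refine (natDegree_iterate_derivative _ _).trans ?_
      omega
    rw [eq_C_of_natDegree_le_zero h1, eval_C, coeff_iterate_derivative, zero_add, hHc,
      Nat.descFactorial_self, nsmul_eq_mul]
  have hHx : ∀ m ≤ r, (derivative^[m] H).eval x = (Nat.factorial m : ℝ) * c m := by
    intro m hm
    rw [← factorial_smul_hasseDeriv]
    rw [LinearMap.smul_apply, eval_smul, nsmul_eq_mul]
    congr 1
    rw [← taylor_coeff]
    have : taylor x H = ∑ m ∈ Finset.range (r + 1), C (c m) * Polynomial.X ^ m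
        + taylor x Q * Polynomial.X ^ (r + 1) := by
      simp [H, T, taylor_mul, taylor_pow, map_sum]
    rw [this, coeff_add, coeff_mul_X_pow', if_neg (by omega), add_zero, finsetSum_coeff]
    simp only [coeff_C_mul_X_pow]
    rw [Finset.sum_ite_eq, if_pos]
    simp; omega
  -- Rolle
  have hHcd : ContDiffOn ℝ (n + r + 1 : ℕ) (fun y => H.eval y) I := (aux_cd H).contDiffOn
  have hder : ∀ m ≤ n + r + 1, ∀ y ∈ I, iteratedDerivWithin m (f - fun y => H.eval y) I y
      = iteratedDerivWithin m f I y - (derivative^[m] H).eval y := by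
    intro m hm y hy
    have hm' : ((m : ℕ) : WithTop ℕ∞) ≤ ((n + r + 1 : ℕ) : WithTop ℕ∞) := by exact_mod_cast hm
    rw [iteratedDerivWithin_sub hy (uniqueDiffOn_Icc hpq) ((hf y hy).of_le hm')
      ((hHcd y hy).of_le hm'), aux_poly_derivWithin p q hpq H m y hy]
  have hCI : convexHull ℝ (insert x (X '' Set.Iic n)) ⊆ I := by
    apply convexHull_min _ (convex_Icc p q)
    rintro y (rfl | ⟨i, hi, rfl⟩)
    exacts [hx, hX i hi]
  obtain ⟨ξ, hξ, hξ0⟩ := aux_rolle_multi p q hpq (f - fun y => H.eval y)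
    (convexHull ℝ (insert x (X '' Set.Iic n))) (convex_convexHull ℝ _).ordConnected hCI r n
    (hf.sub hHcd) x (subset_convexHull ℝ _ (Set.mem_insert _ _))
    ((Finset.range (n + 1)).image X) (by rw [Finset.card_image_of_injOn hinj, Finset.card_range])
    (by
      intro y hy
      obtain ⟨i, hi, rfl⟩ := Finset.mem_image.1 hy
      refine subset_convexHull ℝ _ (Set.mem_insert_of_mem _ ⟨i, ?_, rfl⟩)
      simpa [Nat.lt_succ_iff] using hi)
    (by
      intro hy
      obtain ⟨i, hi, h⟩ := Finset.mem_image.1 hy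
      exact hxX i (by simpa [Nat.lt_succ_iff] using hi) h)
    (by
      intro y hy
      obtain ⟨i, hi, rfl⟩ := Finset.mem_image.1 hy
      simp [hHnode i (by simpa [Nat.lt_succ_iff] using hi)])
    (by
      intro m hm
      rw [← hI, hder m (by omega) x hx, hHx m hm]
      simp only [hc]
      have : (Nat.factorial m : ℝ) ≠ 0 := by exact_mod_cast Nat.factorial_ne_zero m
      field_simp
      ring)
  refine ⟨ξ, hξ, ?_⟩
  rw [← hI, hder _ le_rfl ξ (hCI hξ), hHtop] at hξ0
  have hfac : (Nat.factorial (n + r + 1) : ℝ) ≠ 0 := by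
    exact_mod_cast Nat.factorial_ne_zero (n + r + 1)
  have hval : iteratedDerivWithin (n + r + 1) f I ξ / (Nat.factorial (n + r + 1) : ℝ)
      = Q.coeff n := by
    rw [sub_eq_zero.1 hξ0]; field_simp
  rw [hval, hK]
  simp only [aux_neville_sum X x _ n hXX hxX]
  have e : ∀ m, c m * ((∏ i ∈ Finset.range (n + 1), (x - X i)) *
      ∑ i ∈ Finset.range (n + 1), 1 / (X i - x) ^ (r - m) / (x - X i) /
        ∏ j ∈ (Finset.range (n + 1)).erase i, (X i - X j))
      = (∏ i ∈ Finset.range (n + 1), (x - X i)) *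
      ∑ i ∈ Finset.range (n + 1), c m * (1 / (X i - x) ^ (r - m) / (x - X i) /
        ∏ j ∈ (Finset.range (n + 1)).erase i, (X i - X j)) := by
    intro m; rw [← Finset.mul_sum]; ring
  change _ = ∑ m ∈ Finset.range (r + 1), c m * _ - _
  simp only [e]
  rw [← Finset.mul_sum, ← mul_sub, Finset.sum_comm, ← Finset.sum_sub_distrib]
  congr 1
  refine Finset.sum_congr rfl fun i hi => ?_
  have hi' : i ≤ n := by simpa [Nat.lt_succ_iff] using hi
  have hne : X i - x ≠ 0 := sub_ne_zero.2 (hxX i hi')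
  have hneg : x - X i = -(X i - x) := by ring
  have e2 : ∑ m ∈ Finset.range (r + 1), c m * (1 / (X i - x) ^ (r - m) / (x - X i) /
        ∏ j ∈ (Finset.range (n + 1)).erase i, (X i - X j))
      = T.eval (X i) / (X i - x) ^ r / (x - X i) /
        ∏ j ∈ (Finset.range (n + 1)).erase i, (X i - X j) := by
    rw [hTeval, Finset.sum_div, Finset.sum_div, Finset.sum_div]
    refine Finset.sum_congr rfl fun m hm => ?_
    have hm' : m ≤ r := by simpa [Nat.lt_succ_iff] using hm
    have : (X i - x) ^ r = (X i - x) ^ (r - m) * (X i - x) ^ m := by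
      rw [← pow_add]; congr 1; omega
    rw [this]
    have h1 : c m * (X i - x) ^ m / ((X i - x) ^ (r - m) * (X i - x) ^ m)
       = c m * (1 / (X i - x) ^ (r - m)) := by field_simp
    rw [h1]; ring
  rw [e2, ← sub_div]
  congr 1
  simp only [W]
  rw [hneg]
  field_simp
  ring

theorem stmt_6 (p q : ℝ) (hpq : p < q) (n t : ℕ) (hn : 1 ≤ n)
    (f : ℝ → ℝ) (hf : ContDiffOn ℝ (n + t + 1 : ℕ) f (Set.Icc p q))
    (x : ℝ) (X : ℕ → ℝ)
    (hx : x ∈ Set.Icc p q) (hX : ∀ i ≤ n, X i ∈ Set.Icc p q)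
    (hxX : ∀ i ≤ n, X i ≠ x)
    (hXX : ∀ i j, i ≤ n → j ≤ n → i ≠ j → X i ≠ X j)
    (a : ℕ → ℝ) (ha0 : a 0 = 1)
    (hak : ∀ m, 1 ≤ m → m ≤ t →
      a m = -(∑ j ∈ Finset.range m, a j * neville X x (fun i => 1 / (X i - x) ^ (m - j)) n 0)) :
    ∃ ξ : ℕ → ℝ, (∀ j ≤ t, ξ j ∈ convexHull ℝ (insert x (X '' Set.Iic n))) ∧
      iteratedDerivWithin t f (Set.Icc p q) x / (Nat.factorial t : ℝ)
        = (∑ j ∈ Finset.range (t + 1),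
              a j * neville X x (fun i => f (X i) / (X i - x) ^ (t - j)) n 0)
          + (∏ i ∈ Finset.range (n + 1), (x - X i))
            * ∑ j ∈ Finset.range (t + 1),
                a j * iteratedDerivWithin (t + n + 1 - j) f (Set.Icc p q) (ξ j)
                  / (Nat.factorial (t + n + 1 - j) : ℝ) := by
  have hkey : ∀ r, r ≤ t → _ := fun r hr => aux_key p q hpq n r f
    (hf.of_le (by exact_mod_cast (by omega : n + r + 1 ≤ n + t + 1))) x X hx hX hxX hXX
  choose ξ hξ hξe using hkey
  refine ⟨fun j => if h : j ≤ t then ξ (t - j) (by omega) else x, ?_, ?_⟩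
  · intro j hj
    simp only [hj, dif_pos]
    exact hξ _ _
  set N : ℕ → ℝ := fun k => neville X x (fun i => 1 / (X i - x) ^ k) n 0 with hN
  have hN0 : N 0 = 1 := by
    simp only [hN, pow_zero, div_one]
    exact aux_neville_one X x n hXX
  set c : ℕ → ℝ := fun m => iteratedDerivWithin m f (Set.Icc p q) x / (Nat.factorial m : ℝ) with hc
  have hconv : ∀ m, 1 ≤ m → m ≤ t → ∑ j ∈ Finset.range (m + 1), a j * N (m - j) = 0 := by
    intro m h1 h2
    rw [Finset.sum_range_succ, Nat.sub_self, hN0, hak m h1 h2]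
    simp [hN]
  set P := ∏ i ∈ Finset.range (n + 1), (x - X i) with hP
  have e1 : ∀ j ∈ Finset.range (t + 1),
      a j * neville X x (fun i => f (X i) / (X i - x) ^ (t - j)) n 0 =
      ∑ m ∈ Finset.range (t + 1 - j), c m * (a j * N (t - m - j)) -
      P * (a j * iteratedDerivWithin (t + n + 1 - j) f (Set.Icc p q)
        (if h : j ≤ t then ξ (t - j) (by omega) else x) / (Nat.factorial (t + n + 1 - j) : ℝ)) := by
    intro j hj
    have hj' : j ≤ t := by simpa [Nat.lt_succ_iff] using hj
    rw [hξe (t - j) (by omega), dif_pos hj', show n + (t - j) + 1 = t + n + 1 - j by omega,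
      show t - j + 1 = t + 1 - j by omega, mul_sub, Finset.mul_sum]
    congr 1
    · refine Finset.sum_congr rfl fun m _ => ?_
      rw [show t - m - j = t - j - m by omega]
      simp only [hc, hN]
      ring
    · ring
  rw [Finset.sum_congr rfl e1, Finset.sum_sub_distrib, ← Finset.mul_sum, sub_add_cancel]
  have e2 : ∑ j ∈ Finset.range (t + 1), ∑ m ∈ Finset.range (t + 1 - j), c m * (a j * N (t - m - j))
      = ∑ m ∈ Finset.range (t + 1), ∑ j ∈ Finset.range (t - m + 1), c m * (a j * N (t - m - j)) := by
    apply Finset.sum_comm'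
    intro j m
    simp only [Finset.mem_range]
    omega
  rw [e2, Finset.sum_range_succ, Finset.sum_eq_zero]
  · simp [hN0, ha0, hc]
  · intro m hm
    have hm' : m < t := by simpa using hm
    rw [← Finset.mul_sum, hconv (t - m) (by omega) (by omega), mul_zero]
end
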